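/- arXiv:math/0105128 — 9 statements merged into one kernel-verified Lean document; each statement's English description precedes it below -/
import Mathlib

section
/- Let λ > 1. On ℝ⁴ with coordinates (q₃, p₁, p₂, p₃) define H(q₃,p₁,p₂,p₃) = ½((λ^{q₃}p₁ + λ^{−q₃}p₂)² + p₃²), I₂(q₃,p₁,p₂,p₃) = p₁p₂, and I₃(q₃,p₁,p₂,p₃) = sin(2π·ln|p₁|/ln λ)·exp(−(p₁p₂)^{−2}) when p₁p₂ ≠ 0 and I₃ = 0 when p₁p₂ = 0. Let T : ℝ⁴ → ℝ⁴ be T(q₃,p₁,p₂,p₃) = (q₃+1, λ^{−1}p₁, λp₂, p₃). Then H ∘ T = H, I₂ ∘ T = I₂ and I₃ ∘ T = I₃. -/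
/-!
STATEMENT 2: For λ > 1, on ℝ⁴ with coordinates (q₃,p₁,p₂,p₃), the Hamiltonian
H = ½((λ^{q₃}p₁ + λ^{−q₃}p₂)² + p₃²) and the integrals I₂ = p₁p₂,
I₃ = sin(2π ln|p₁| / ln λ)·exp(−(p₁p₂)^{−2}) (extended by 0 on {p₁p₂ = 0}) are
invariant under the deck transformation T(q₃,p₁,p₂,p₃) = (q₃+1, λ⁻¹p₁, λp₂, p₃).
-/

/-!
The deck transformation multiplies `p₁` by `l⁻¹` and `p₂` by `l`, while the shift `q₃ ↦ q₃ + 1`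
multiplies `l ^ q₃` by `l` and `l ^ (-q₃)` by `l⁻¹`. The products `l ^ q₃ * p₁`, `l ^ (-q₃) * p₂`
and `p₁ * p₂` are therefore fixed, and `logb l |p₁|` drops by `1`, which moves the argument of the
sine by exactly one period.
-/

section Scaling

theorem inv_mul_mul_mul_of_ne_zero {G₀ : Type*} [CommGroupWithZero G₀] {c : G₀} (hc : c ≠ 0)
    (a b : G₀) : c⁻¹ * a * (c * b) = a * b := by
  rw [mul_mul_mul_comm, inv_mul_cancel₀ hc, one_mul]

variable {l : ℝ}

theorem rpow_add_one_mul_inv_mul (hl : l ≠ 0) (q p : ℝ) :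
    l ^ (q + 1) * (l⁻¹ * p) = l ^ q * p := by
  rw [Real.rpow_add_one hl, mul_assoc, mul_inv_cancel_left₀ hl]

theorem rpow_neg_add_one_mul_mul (hl : l ≠ 0) (q p : ℝ) :
    l ^ (-(q + 1)) * (l * p) = l ^ (-q) * p := by
  rw [neg_add', Real.rpow_sub_one hl, div_mul_eq_mul_div, mul_div_assoc, mul_div_cancel_left₀ p hl]

theorem logb_inv_mul (hl : Real.log l ≠ 0) {p : ℝ} (hp : p ≠ 0) :
    Real.logb l (l⁻¹ * p) = Real.logb l p - 1 := by
  have hl₀ : l ≠ 0 := (Real.log_ne_zero.mp hl).1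
  rw [inv_mul_eq_div, Real.logb_div hp hl₀, Real.logb, Real.logb, div_self hl]

theorem sin_two_pi_mul_log_abs_inv_mul_div_log (hl : Real.log l ≠ 0) {p : ℝ} (hp : p ≠ 0) :
    Real.sin (2 * Real.pi * Real.log |l⁻¹ * p| / Real.log l) =
      Real.sin (2 * Real.pi * Real.log |p| / Real.log l) := by
  simp only [Real.log_abs, mul_div_assoc, Real.log_div_log]
  rw [logb_inv_mul hl hp, mul_sub_one, Real.sin_sub_two_pi]

end Scaling

section Suspension

/-- The action on the reduced phase space, with coordinates `(q₃, p₁, p₂, p₃)`, of the deck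
transformation of the cylinder over the suspension of a hyperbolic matrix with eigenvalue `l`. -/
noncomputable def deckTransformation (l : ℝ) (x : ℝ × ℝ × ℝ × ℝ) : ℝ × ℝ × ℝ × ℝ :=
  (x.1 + 1, l⁻¹ * x.2.1, l * x.2.2.1, x.2.2.2)

/-- The sub-Riemannian Hamiltonian `H` of the suspension, in eigen-coordinates. -/
noncomputable def suspensionHamiltonian (l : ℝ) (x : ℝ × ℝ × ℝ × ℝ) : ℝ :=
  (1 / 2) * ((l ^ x.1 * x.2.1 + l ^ (-x.1) * x.2.2.1) ^ 2 + x.2.2.2 ^ 2)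

/-- The quadratic integral `I₂` of the geodesic flow. -/
def momentumProduct (x : ℝ × ℝ × ℝ × ℝ) : ℝ :=
  x.2.1 * x.2.2.1

/-- The integral `I₃` of the geodesic flow, extended by `0` to the zero set of `I₂`. The extension
is explicit because `0 ^ (-2 : ℤ) = 0` would give the exponential the value `1` there. -/
noncomputable def oscillatingIntegral (l : ℝ) (x : ℝ × ℝ × ℝ × ℝ) : ℝ :=
  if x.2.1 * x.2.2.1 = 0 then 0 else
    Real.sin (2 * Real.pi * Real.log |x.2.1| / Real.log l) *
      Real.exp (-((x.2.1 * x.2.2.1) ^ (-2 : ℤ)))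

variable {l : ℝ}

theorem suspensionHamiltonian_comp_deckTransformation (hl : l ≠ 0) :
    suspensionHamiltonian l ∘ deckTransformation l = suspensionHamiltonian l := by
  funext ⟨q₃, p₁, p₂, p₃⟩
  simp only [Function.comp_apply, suspensionHamiltonian, deckTransformation,
    rpow_add_one_mul_inv_mul hl, rpow_neg_add_one_mul_mul hl]

theorem momentumProduct_comp_deckTransformation (hl : l ≠ 0) :
    momentumProduct ∘ deckTransformation l = momentumProduct :=
  funext fun x => inv_mul_mul_mul_of_ne_zero hl x.2.1 x.2.2.1

theorem oscillatingIntegral_comp_deckTransformation (hl : Real.log l ≠ 0) :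
    oscillatingIntegral l ∘ deckTransformation l = oscillatingIntegral l := by
  have hl₀ : l ≠ 0 := (Real.log_ne_zero.mp hl).1
  funext ⟨q₃, p₁, p₂, p₃⟩
  simp only [Function.comp_apply, oscillatingIntegral, deckTransformation,
    inv_mul_mul_mul_of_ne_zero hl₀]
  split_ifs with hp
  · rfl
  · rw [sin_two_pi_mul_log_abs_inv_mul_div_log hl (left_ne_zero_of_mul hp)]

end Suspension

theorem integrals_invariant_hyperbolic_case_general {l : ℝ} (hl₀ : 0 < l) (hl₁ : l ≠ 1) :
    suspensionHamiltonian l ∘ deckTransformation l = suspensionHamiltonian l ∧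
      momentumProduct ∘ deckTransformation l = momentumProduct ∧
      oscillatingIntegral l ∘ deckTransformation l = oscillatingIntegral l :=
  ⟨suspensionHamiltonian_comp_deckTransformation hl₀.ne',
    momentumProduct_comp_deckTransformation hl₀.ne',
    oscillatingIntegral_comp_deckTransformation (Real.log_ne_zero_of_pos_of_ne_one hl₀ hl₁)⟩

theorem integrals_invariant_hyperbolic_case (l : ℝ) (hl : 1 < l)
    (H I₂ I₃ : ℝ × ℝ × ℝ × ℝ → ℝ) (T : ℝ × ℝ × ℝ × ℝ → ℝ × ℝ × ℝ × ℝ)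
    (hH : H = fun x => (1/2) * ((l ^ x.1 * x.2.1 + l ^ (-x.1) * x.2.2.1)^2 + x.2.2.2^2))
    (hI₂ : I₂ = fun x => x.2.1 * x.2.2.1)
    (hI₃ : I₃ = fun x => if x.2.1 * x.2.2.1 = 0 then 0 else
      Real.sin (2 * Real.pi * Real.log |x.2.1| / Real.log l) *
        Real.exp (-((x.2.1 * x.2.2.1) ^ (-2 : ℤ))))
    (hT : T = fun x => (x.1 + 1, l⁻¹ * x.2.1, l * x.2.2.1, x.2.2.2)) :
    H ∘ T = H ∧ I₂ ∘ T = I₂ ∧ I₃ ∘ T = I₃ := by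
  subst hH hI₂ hI₃ hT
  exact integrals_invariant_hyperbolic_case_general (zero_lt_one.trans hl) hl.ne'
end

section
/- Let λ > 1. On ℝ⁶ with coordinates (q₁,q₂,q₃,p₁,p₂,p₃) define H = ½((λ^{q₃}p₁ + λ^{−q₃}p₂)² + p₃²), I₂ = p₁p₂, and I₃ = sin(2π·ln|p₁|/ln λ)·exp(−(p₁p₂)^{−2}) for p₁p₂ ≠ 0, extended by 0 on {p₁p₂ = 0}. Then the canonical Poisson brackets satisfy {H,I₂} = 0, {H,I₃} = 0 and {I₂,I₃} = 0 identically on ℝ⁶, and the differentials dH, dI₂, dI₃ are linearly independent at every point of a dense open subset of ℝ⁶. -/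
/-!
STATEMENT 3: For λ > 1, on ℝ⁶ = T*ℝ³ with coordinates (q₁,q₂,q₃,p₁,p₂,p₃),
the functions H = ½((λ^{q₃}p₁ + λ^{−q₃}p₂)² + p₃²), I₂ = p₁p₂ and
I₃ = sin(2π ln|p₁| / ln λ)·exp(−(p₁p₂)^{−2}) (extended by 0 on {p₁p₂ = 0})
Poisson-commute pairwise, and their differentials are linearly independent on a
dense open subset of ℝ⁶.
Coordinates: qᵢ = x i for i = 0,1,2 and pᵢ = x (i+3) for i = 0,1,2.
-/

/-- Partial derivative of a function on ℝ⁶ in the `i`-th coordinate direction. -/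
noncomputable def pderiv6 (i : Fin 6) (F : (Fin 6 → ℝ) → ℝ) (x : Fin 6 → ℝ) : ℝ :=
  fderiv ℝ F x (Pi.single i 1)

/-- The canonical Poisson bracket on ℝ⁶ = T*ℝ³:
`{F,G} = Σᵢ (∂F/∂qᵢ · ∂G/∂pᵢ − ∂F/∂pᵢ · ∂G/∂qᵢ)`. -/
noncomputable def poisson6 (F G : (Fin 6 → ℝ) → ℝ) (x : Fin 6 → ℝ) : ℝ :=
  ∑ i : Fin 3,
    (pderiv6 ⟨i.1, by have := i.isLt; omega⟩ F x *
       pderiv6 ⟨i.1 + 3, by have := i.isLt; omega⟩ G x -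
     pderiv6 ⟨i.1 + 3, by have := i.isLt; omega⟩ F x *
       pderiv6 ⟨i.1, by have := i.isLt; omega⟩ G x)

/-!
The functions `H`, `I₂`, `I₃` do not involve `q₁`, `q₂`, and `I₂`, `I₃` involve only `p₁`, `p₂`, so
every term of each bracket contains a vanishing partial derivative.

Since `∂H/∂p₃ = p₃` while `I₂`, `I₃` do not depend on `p₃`, the three differentials are independent
where `p₃ ≠ 0` and the Jacobian of `(I₂, I₃)` in `(p₁, p₂)` does not vanish. Off `{p₁p₂ = 0}` one
has `I₃ = S(p₁) E(I₂)` with `S(t) = sin(c log|t|)`, `E(u) = exp(-u⁻²)`, `c = 2π / log λ`. Hence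
`dI₃` is `S'(p₁) E(I₂) dp₁` modulo `dI₂`, and the Jacobian is `-p₁ S'(p₁) E(I₂)`, whose zeros lie
over the countable zero set of `cos(c log|p₁|)`.
-/

section DependsOn

variable {𝕜 E F : Type*} [NontriviallyNormedField 𝕜] [NormedAddCommGroup E] [NormedSpace 𝕜 E]
  [NormedAddCommGroup F] [NormedSpace 𝕜 F]

theorem fderiv_apply_eq_zero_of_forall_add_smul {f : E → F} {x v : E}
    (hf : ∀ t : 𝕜, f (x + t • v) = f x) : fderiv 𝕜 f x v = 0 := by
  by_cases hd : DifferentiableAt 𝕜 f x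
  · rw [← hd.lineDeriv_eq_fderiv]
    simp [lineDeriv, hf]
  · simp [fderiv_zero_of_not_differentiableAt hd]

theorem fderiv_single_eq_zero_of_dependsOn {ι : Type*} [Finite ι] [DecidableEq ι]
    {f : (ι → 𝕜) → F} {s : Set ι} (hf : DependsOn f s) {i : ι} (hi : i ∉ s) (x : ι → 𝕜) (a : 𝕜) :
    fderiv 𝕜 f x (Pi.single i a) = 0 := by
  cases nonempty_fintype ι
  exact fderiv_apply_eq_zero_of_forall_add_smul fun t => hf fun j hj => by
    simp [Pi.single_eq_of_ne (ne_of_mem_of_not_mem hj hi)]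

end DependsOn

theorem linearIndependent_of_det_apply_ne_zero {R M n : Type*} [CommRing R] [IsDomain R]
    [TopologicalSpace R] [IsTopologicalRing R] [AddCommGroup M] [Module R M] [TopologicalSpace M]
    [Fintype n] [DecidableEq n] {φ : n → M →L[R] R} (v : n → M)
    (h : (Matrix.of fun i j => φ i (v j)).det ≠ 0) : LinearIndependent R φ := by
  let evalAt : (M →L[R] R) →ₗ[R] n → R :=
    { toFun := fun ψ j => ψ (v j), map_add' := fun _ _ => rfl, map_smul' := fun _ _ => rfl }
  exact .of_comp evalAt (Matrix.linearIndependent_rows_of_det_ne_zero h)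

section PhaseSpace

variable {F G : (Fin 6 → ℝ) → ℝ} {s t : Set (Fin 6)}

theorem pderiv6_eq_zero_of_dependsOn (hF : DependsOn F s) {i : Fin 6} (hi : i ∉ s)
    (x : Fin 6 → ℝ) : pderiv6 i F x = 0 :=
  fderiv_single_eq_zero_of_dependsOn hF hi x 1

/-- In `Fin 6` addition wraps around, so `i ↦ i + 3` exchanges the indices of `qₖ` and `pₖ`. -/
theorem poisson6_eq_zero_of_dependsOn (hF : DependsOn F s) (hG : DependsOn G t)
    (hst : ∀ i ∈ s, i + 3 ∉ t) (x : Fin 6 → ℝ) : poisson6 F G x = 0 := by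
  have hmul (i : Fin 6) : pderiv6 i F x * pderiv6 (i + 3) G x = 0 := by
    by_cases hi : i ∈ s
    · rw [pderiv6_eq_zero_of_dependsOn hG (hst i hi), mul_zero]
    · rw [pderiv6_eq_zero_of_dependsOn hF hi, zero_mul]
  refine Finset.sum_eq_zero fun i _ => ?_
  fin_cases i
  · exact sub_eq_zero.mpr ((hmul 0).trans (hmul 3).symm)
  · exact sub_eq_zero.mpr ((hmul 1).trans (hmul 4).symm)
  · exact sub_eq_zero.mpr ((hmul 2).trans (hmul 5).symm)

theorem pderiv6_half_mul_add_sq {K : (Fin 6 → ℝ) → ℝ} {x : Fin 6 → ℝ} {i : Fin 6}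
    (hK : DifferentiableAt ℝ K x) (hKs : DependsOn K s) (hi : i ∉ s) :
    pderiv6 i (fun y => (1 / 2) * (K y + y i ^ 2)) x = x i := by
  have hKi : fderiv ℝ K x (Pi.single i 1) = 0 := pderiv6_eq_zero_of_dependsOn hKs hi x
  have h := (hK.hasFDerivAt.fun_add ((hasFDerivAt_apply (𝕜 := ℝ) i x).pow 2)).const_mul (1 / 2 : ℝ)
  rw [pderiv6, h.fderiv]
  simp [hKi]

/-- The Jacobian determinant `∂(F, G)/∂(xᵢ, xⱼ)`. -/
noncomputable def jacobian6 (i j : Fin 6) (F G : (Fin 6 → ℝ) → ℝ) (x : Fin 6 → ℝ) : ℝ :=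
  pderiv6 i F x * pderiv6 j G x - pderiv6 j F x * pderiv6 i G x

theorem linearIndependent_fderiv_of_dependsOn {H : (Fin 6 → ℝ) → ℝ} {x : Fin 6 → ℝ}
    {i j k : Fin 6} (hF : DependsOn F s) (hG : DependsOn G s) (hk : k ∉ s)
    (hH : pderiv6 k H x ≠ 0) (hFG : jacobian6 i j F G x ≠ 0) :
    LinearIndependent ℝ ![fderiv ℝ H x, fderiv ℝ F x, fderiv ℝ G x] := by
  refine linearIndependent_of_det_apply_ne_zero
    ![Pi.single k 1, Pi.single i 1, Pi.single j 1] ?_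
  have hdet := mul_ne_zero hH hFG
  have hFk := pderiv6_eq_zero_of_dependsOn hF hk x
  have hGk := pderiv6_eq_zero_of_dependsOn hG hk x
  simp only [jacobian6, pderiv6] at hdet hFk hGk
  simpa [Matrix.det_fin_three, hFk, hGk, mul_sub, mul_assoc] using hdet

theorem jacobian6_mul_comp_mul {S E : ℝ → ℝ} {x : Fin 6 → ℝ} {i j : Fin 6} (hij : i ≠ j)
    (hS : DifferentiableAt ℝ S (x i)) (hE : DifferentiableAt ℝ E (x i * x j)) :
    jacobian6 i j (fun y => y i * y j) (fun y => S (y i) * E (y i * y j)) x =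
      -(x i * deriv S (x i) * E (x i * x j)) := by
  have hi := hasFDerivAt_apply (𝕜 := ℝ) i x
  have hprod := hi.fun_mul (hasFDerivAt_apply (𝕜 := ℝ) j x)
  have hSE := (hS.hasDerivAt.comp_hasFDerivAt x hi).fun_mul
    (hE.hasDerivAt.comp_hasFDerivAt x hprod)
  simp only [Function.comp_def] at hSE
  simp only [jacobian6, pderiv6, hprod.fderiv, hSE.fderiv]
  simp only [add_apply, smul_apply, ContinuousLinearMap.proj_apply, ne_eq, hij.symm,
    not_false_eq_true, Pi.single_eq_of_ne, smul_eq_mul, mul_zero, Pi.single_eq_same, mul_one,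
    zero_add, smul_add, hij, add_zero]
  ring

end PhaseSpace

theorem countable_setOf_cos_eq_zero : {u : ℝ | Real.cos u = 0}.Countable := by
  refine (Set.countable_range fun k : ℤ => (2 * k + 1) * Real.pi / 2).mono fun u hu => ?_
  obtain ⟨k, hk⟩ := Real.cos_eq_zero_iff.mp hu
  exact ⟨k, hk.symm⟩

theorem countable_preimage_log {s : Set ℝ} (hs : s.Countable) : (Real.log ⁻¹' s).Countable := by
  refine ((Set.countable_singleton 0).union
    ((hs.image Real.exp).union (hs.image fun u => -Real.exp u))).mono fun t ht => ?_
  rcases lt_trichotomy t 0 with hneg | hzero | hpos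
  · exact .inr (.inr ⟨Real.log t, ht, by simp [Real.exp_log_of_neg hneg]⟩)
  · exact .inl hzero
  · exact .inr (.inl ⟨Real.log t, ht, Real.exp_log hpos⟩)

theorem hasDerivAt_sin_mul_log_abs (c : ℝ) {t : ℝ} (ht : t ≠ 0) :
    HasDerivAt (fun t => Real.sin (c * Real.log |t|))
      (Real.cos (c * Real.log |t|) * (c * t⁻¹)) t := by
  simp only [Real.log_abs]
  exact ((Real.hasDerivAt_log ht).const_mul c).sin

/-- The points at which `t ↦ sin (c log |t|)` is defined and, for `c ≠ 0`, has nonzero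
derivative. -/
def sinLogRegularSet (c : ℝ) : Set ℝ := {t | t ≠ 0 ∧ Real.cos (c * Real.log |t|) ≠ 0}

theorem isOpen_sinLogRegularSet (c : ℝ) : IsOpen (sinLogRegularSet c) := by
  have hcos : ContinuousOn (fun t : ℝ => Real.cos (c * Real.log |t|)) {0}ᶜ := by
    simp only [Real.log_abs]
    exact Real.continuous_cos.comp_continuousOn (continuousOn_const.mul Real.continuousOn_log)
  exact hcos.isOpen_inter_preimage isOpen_compl_singleton isOpen_compl_singleton

theorem dense_sinLogRegularSet {c : ℝ} (hc : c ≠ 0) : Dense (sinLogRegularSet c) := by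
  have hzeros : {t : ℝ | Real.cos (c * Real.log t) = 0}.Countable :=
    countable_preimage_log (countable_setOf_cos_eq_zero.preimage (mul_right_injective₀ hc))
  refine (((Set.countable_singleton 0).union hzeros).dense_compl ℝ).mono fun t ht => ?_
  rw [Set.mem_compl_iff, Set.mem_union, not_or] at ht
  exact ⟨ht.1, by simpa only [Real.log_abs, Set.mem_ofPred_eq] using ht.2⟩

/-- The phase points at which the differentials of `H`, `I₂` and `I₃` are shown to be independent;
`c` is the frequency of the oscillation of `I₃` in `log |p₁|`. -/
def regularLocus (c : ℝ) : Set (Fin 6 → ℝ) :=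
  {x | x 3 ∈ sinLogRegularSet c ∧ x 4 ≠ 0 ∧ x 5 ≠ 0}

theorem isOpen_regularLocus (c : ℝ) : IsOpen (regularLocus c) := by
  have heval (i : Fin 6) : Continuous fun x : Fin 6 → ℝ => x i := continuous_apply i
  exact ((isOpen_sinLogRegularSet c).preimage (heval 3)).inter
    ((isOpen_ne.preimage (heval 4)).inter (isOpen_ne.preimage (heval 5)))

theorem dense_regularLocus {c : ℝ} (hc : c ≠ 0) : Dense (regularLocus c) := by
  have heval (i : Fin 6) : Continuous fun x : Fin 6 → ℝ => x i := continuous_apply i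
  have hevalOpen (i : Fin 6) : IsOpenMap fun x : Fin 6 → ℝ => x i := isOpenMap_eval i
  have hp₁ := (dense_sinLogRegularSet hc).preimage (hevalOpen 3)
  have hp₂ := (dense_compl_singleton (0 : ℝ)).preimage (hevalOpen 4)
  have hp₃ := (dense_compl_singleton (0 : ℝ)).preimage (hevalOpen 5)
  exact hp₁.inter_of_isOpen_left
    (hp₂.inter_of_isOpen_left hp₃ (isOpen_ne.preimage (heval 4)))
    ((isOpen_sinLogRegularSet c).preimage (heval 3))

theorem jacobian6_mul_sin_log_mul_exp {c : ℝ} {G : (Fin 6 → ℝ) → ℝ} {i j : Fin 6}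
    (hij : i ≠ j)
    (hG : ∀ y, y i * y j ≠ 0 →
      G y = Real.sin (c * Real.log |y i|) * Real.exp (-((y i * y j) ^ (-2 : ℤ))))
    {x : Fin 6 → ℝ} (hi : x i ≠ 0) (hj : x j ≠ 0) :
    jacobian6 i j (fun y => y i * y j) G x =
      -(c * Real.cos (c * Real.log |x i|) * Real.exp (-((x i * x j) ^ (-2 : ℤ)))) := by
  have hprod : x i * x j ≠ 0 := mul_ne_zero hi hj
  have hnhds : G =ᶠ[nhds x] fun y =>
      Real.sin (c * Real.log |y i|) * Real.exp (-((y i * y j) ^ (-2 : ℤ))) := by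
    have hcont : ContinuousAt (fun y : Fin 6 → ℝ => y i * y j) x := by fun_prop
    filter_upwards [hcont.eventually_ne hprod] with y hy using hG y hy
  have hsin := hasDerivAt_sin_mul_log_abs c hi
  have hexp : DifferentiableAt ℝ (fun u : ℝ => Real.exp (-(u ^ (-2 : ℤ)))) (x i * x j) :=
    (differentiableAt_zpow.mpr (.inl hprod)).neg.exp
  have hjac := jacobian6_mul_comp_mul hij hsin.differentiableAt hexp
  simp only [jacobian6, pderiv6, hnhds.fderiv_eq] at hjac ⊢
  rw [hjac, hsin.deriv]
  field_simp

/-- For `c = 2π / log λ` the oscillating factor of `I₃` is invariant under `p₁ ↦ λ p₁`, which lets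
`I₃` descend to the suspension. -/
theorem liouville_integrability_hyperbolic_case_general {f g : ℝ → ℝ} (hf : Differentiable ℝ f)
    (hg : Differentiable ℝ g) {c : ℝ} (hc : c ≠ 0) (H I₂ I₃ : (Fin 6 → ℝ) → ℝ)
    (hH : H = fun x => (1 / 2) * ((f (x 2) * x 3 + g (x 2) * x 4) ^ 2 + x 5 ^ 2))
    (hI₂ : I₂ = fun x => x 3 * x 4)
    (hI₃ : I₃ = fun x => if x 3 * x 4 = 0 then 0 else
      Real.sin (c * Real.log |x 3|) * Real.exp (-((x 3 * x 4) ^ (-2 : ℤ)))) :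
    (∀ x, poisson6 H I₂ x = 0) ∧ (∀ x, poisson6 H I₃ x = 0) ∧
    (∀ x, poisson6 I₂ I₃ x = 0) ∧
    ∃ U : Set (Fin 6 → ℝ), IsOpen U ∧ Dense U ∧ ∀ x ∈ U,
      LinearIndependent ℝ ![fderiv ℝ H x, fderiv ℝ I₂ x, fderiv ℝ I₃ x] := by
  subst hH hI₂
  set K : (Fin 6 → ℝ) → ℝ := fun x => (f (x 2) * x 3 + g (x 2) * x 4) ^ 2
  have hKdep : DependsOn K {2, 3, 4} := fun x y h => by simp [K, h]
  have hHdep : DependsOn (fun x => (1 / 2) * (K x + x 5 ^ 2)) {2, 3, 4, 5} :=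
    fun x y h => by simp [K, h]
  have hI₂dep : DependsOn (fun x : Fin 6 → ℝ => x 3 * x 4) {3, 4} := fun x y h => by simp [h]
  have hI₃dep : DependsOn I₃ {3, 4} := fun x y h => by simp [hI₃, h]
  refine ⟨poisson6_eq_zero_of_dependsOn hHdep hI₂dep (by simp),
    poisson6_eq_zero_of_dependsOn hHdep hI₃dep (by simp),
    poisson6_eq_zero_of_dependsOn hI₂dep hI₃dep (by simp),
    regularLocus c, isOpen_regularLocus c, dense_regularLocus hc, ?_⟩
  rintro x ⟨⟨hp₁, hcos⟩, hp₂, hp₃⟩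
  have hH : pderiv6 5 (fun x => (1 / 2) * (K x + x 5 ^ 2)) x = x 5 :=
    pderiv6_half_mul_add_sq (by fun_prop) hKdep (by decide)
  have hjac := jacobian6_mul_sin_log_mul_exp (G := I₃) (i := 3) (j := 4) (c := c)
    (by decide) (by rw [hI₃]; exact fun y hy => if_neg hy) hp₁ hp₂
  refine linearIndependent_fderiv_of_dependsOn (i := 3) (j := 4) hI₂dep hI₃dep
    (k := 5) (by decide) (hH ▸ hp₃) ?_
  rw [hjac]
  exact neg_ne_zero.mpr (mul_ne_zero (mul_ne_zero hc hcos) (Real.exp_ne_zero _))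

theorem liouville_integrability_hyperbolic_case (l : ℝ) (hl : 1 < l)
    (H I₂ I₃ : (Fin 6 → ℝ) → ℝ)
    (hH : H = fun x => (1/2) * ((l ^ (x 2) * x 3 + l ^ (-(x 2)) * x 4)^2 + (x 5)^2))
    (hI₂ : I₂ = fun x => x 3 * x 4)
    (hI₃ : I₃ = fun x => if x 3 * x 4 = 0 then 0 else
      Real.sin (2 * Real.pi * Real.log |x 3| / Real.log l) *
        Real.exp (-((x 3 * x 4) ^ (-2 : ℤ)))) :
    (∀ x, poisson6 H I₂ x = 0) ∧ (∀ x, poisson6 H I₃ x = 0) ∧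
    (∀ x, poisson6 I₂ I₃ x = 0) ∧
    ∃ U : Set (Fin 6 → ℝ), IsOpen U ∧ Dense U ∧ ∀ x ∈ U,
      LinearIndependent ℝ ![fderiv ℝ H x, fderiv ℝ I₂ x, fderiv ℝ I₃ x] := by
  have hl₀ : ℝ → l ≠ 0 := fun _ => (zero_lt_one.trans hl).ne'
  have hfreq : 2 * Real.pi / Real.log l ≠ 0 :=
    div_ne_zero Real.two_pi_pos.ne' (Real.log_pos hl).ne'
  exact liouville_integrability_hyperbolic_case_general (f := (l ^ ·)) (g := fun q => l ^ (-q))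
    (by fun_prop (disch := assumption)) (by fun_prop (disch := assumption)) hfreq H I₂ I₃ hH hI₂
    (by simpa only [div_mul_eq_mul_div] using hI₃)
end

section
/- Let λ > 1. The function F : ℝ² → ℝ defined by F(x,y) = sin(2π·ln|x|/ln λ)·exp(−(xy)^{−2}) for xy ≠ 0 and F(x,y) = 0 for xy = 0 is infinitely differentiable (of class C^∞) on all of ℝ². -/
/-!
Put `t = x * y`. The oscillating factor has the form `φ (log |x|)` with `φ` of temperate growth.
Each differentiation of it costs one power of `x⁻¹`, and `log |x|` grows more slowly than any power
of `x⁻¹`, so `x ^ (n + 1) • φ (log |x|)` is of class `C^n` on the whole line. The flat factor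
`exp (-t⁻²)` stays smooth when multiplied by `t⁻¹ ^ (n + 1)`. Off the axes
`1 = y ^ (n + 1) * t⁻¹ ^ (n + 1) * x ^ (n + 1)`, and distributing these powers over the two factors
exhibits their product as a product of `C^n` functions, for every `n`.
-/

open Filter Function Topology
open scoped ContDiff

section TemperateGrowth

theorem hasTemperateGrowth_sin : Real.sin.HasTemperateGrowth := by
  refine ⟨Real.contDiff_sin, fun n => ⟨0, 1, fun x => ?_⟩⟩
  simpa [norm_iteratedFDeriv_eq_norm_iteratedDeriv] using Real.abs_iteratedDeriv_sin_le_one n x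

variable {E : Type*} [NormedAddCommGroup E] [NormedSpace ℝ E] {φ : ℝ → E}

theorem hasTemperateGrowth_deriv (hφ : φ.HasTemperateGrowth) : (deriv φ).HasTemperateGrowth := by
  refine ⟨(contDiff_infty_iff_deriv.1 hφ.1).2, fun n => ?_⟩
  simpa only [norm_iteratedFDeriv_eq_norm_iteratedDeriv, iteratedDeriv_succ'] using hφ.2 (n + 1)

theorem hasTemperateGrowth_const_smul_add_deriv (hφ : φ.HasTemperateGrowth) (c : ℝ) :
    (fun t => c • φ t + deriv φ t).HasTemperateGrowth :=
  ((HasTemperateGrowth.const c).smul hφ).add (hasTemperateGrowth_deriv hφ)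

theorem tendsto_exp_smul_atBot_nhds_zero (hφ : φ.HasTemperateGrowth) :
    Tendsto (fun t => Real.exp t • φ t) atBot (𝓝 0) := by
  obtain ⟨k, C, hC⟩ := hφ.2 0
  have hlim : Tendsto (fun t : ℝ => C * Real.exp 1 * ((1 - t) ^ k * Real.exp (-(1 - t))))
      atBot (𝓝 0) := by
    have hsub : Tendsto (fun t : ℝ => 1 - t) atBot atTop :=
      tendsto_atTop_add_const_left _ 1 tendsto_neg_atBot_atTop
    simpa using ((Real.tendsto_pow_mul_exp_neg_atTop_nhds_zero k).comp hsub).const_mul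
      (C * Real.exp 1)
  refine squeeze_zero_norm' ?_ hlim
  filter_upwards [eventually_le_atBot 0] with t ht
  calc
    ‖Real.exp t • φ t‖ = Real.exp t * ‖φ t‖ := by
      rw [norm_smul, Real.norm_of_nonneg (by positivity)]
    _ ≤ Real.exp t * (C * (1 + ‖t‖) ^ k) := by
      gcongr
      simpa using hC t
    _ = C * Real.exp 1 * ((1 - t) ^ k * Real.exp (-(1 - t))) := by
      rw [Real.norm_of_nonpos ht, neg_sub, Real.exp_sub, ← sub_eq_add_neg]
      field_simp

theorem continuous_smul_comp_log (hφ : φ.HasTemperateGrowth) :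
    Continuous fun x : ℝ => x • φ (Real.log x) := by
  refine continuous_iff_continuousAt.2 fun x => ?_
  rcases eq_or_ne x 0 with rfl | hx
  · rw [continuousAt_iff_punctured_nhds, zero_smul, tendsto_zero_iff_norm_tendsto_zero]
    refine (((tendsto_exp_smul_atBot_nhds_zero hφ).comp
      Real.tendsto_log_nhdsNE_zero).norm.congr' ?_).trans (by rw [norm_zero])
    filter_upwards [self_mem_nhdsWithin] with x hx
    rw [comp_apply, norm_smul, norm_smul, Real.exp_log_eq_abs hx, norm_abs_eq_norm]
  · exact continuousAt_id.smul (hφ.1.continuous.continuousAt.comp (Real.continuousAt_log hx))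

theorem continuous_pow_succ_smul_comp_log (hφ : φ.HasTemperateGrowth) (n : ℕ) :
    Continuous fun x : ℝ => x ^ (n + 1) • φ (Real.log x) := by
  simpa only [pow_succ, mul_smul] using (continuous_pow n).fun_smul (continuous_smul_comp_log hφ)

theorem hasDerivAt_pow_add_two_smul_comp_log (hφ : φ.HasTemperateGrowth) (n : ℕ) (x : ℝ) :
    HasDerivAt (fun x : ℝ => x ^ (n + 2) • φ (Real.log x))
      (x ^ (n + 1) • ((n + 2 : ℝ) • φ (Real.log x) + deriv φ (Real.log x))) x := by
  -- A derivative computed off the origin extends to the origin by continuity.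
  refine hasDerivAt_of_hasDerivAt_of_ne' (x := 0) (fun y hy => ?_)
    (continuous_pow_succ_smul_comp_log hφ (n + 1)).continuousAt
    (continuous_pow_succ_smul_comp_log
      (hasTemperateGrowth_const_smul_add_deriv hφ _) n).continuousAt x
  have hlog : HasDerivAt (fun y => φ (Real.log y)) (y⁻¹ • deriv φ (Real.log y)) y :=
    (hφ.1.differentiable (by simp) _).hasDerivAt.scomp y (Real.hasDerivAt_log hy)
  refine ((hasDerivAt_pow (n + 2) y).smul hlog).congr_deriv ?_
  have hcancel : y ^ (n + 2) * y⁻¹ = y ^ (n + 1) := by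
    rw [pow_succ, mul_inv_cancel_right₀ hy]
  rw [smul_smul, hcancel, smul_add, smul_smul, add_comm]
  congr 2
  push_cast
  ring_nf

theorem contDiff_pow_succ_smul_comp_log (hφ : φ.HasTemperateGrowth) (n : ℕ) :
    ContDiff ℝ n fun x : ℝ => x ^ (n + 1) • φ (Real.log x) := by
  induction n generalizing φ with
  | zero => exact contDiff_zero.2 (continuous_pow_succ_smul_comp_log hφ 0)
  | succ n ih =>
    have hderiv := hasDerivAt_pow_add_two_smul_comp_log hφ n
    push_cast
    refine contDiff_succ_iff_deriv.2 ⟨fun x => (hderiv x).differentiableAt, by simp, ?_⟩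
    rw [funext fun x => (hderiv x).deriv]
    exact ih (hasTemperateGrowth_const_smul_add_deriv hφ _)

end TemperateGrowth

theorem expNegInvGlue_sq (t : ℝ) :
    expNegInvGlue (t ^ 2) = if t = 0 then 0 else Real.exp (-(t ^ (-2 : ℤ))) := by
  simp [expNegInvGlue, zpow_neg, sq_nonpos_iff]

open Polynomial in
theorem contDiff_inv_pow_mul_expNegInvGlue_sq (k : ℕ) {n : ℕ∞} :
    ContDiff ℝ n fun t : ℝ => t⁻¹ ^ k * expNegInvGlue (t ^ 2) := by
  have hglue : ContDiff ℝ n fun s : ℝ => s⁻¹ ^ k * expNegInvGlue s := by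
    simpa using expNegInvGlue.contDiff_polynomial_eval_inv_mul (n := n) (X ^ k : ℝ[X])
  have hinv (t : ℝ) : t⁻¹ = t * (t ^ 2)⁻¹ := by
    rcases eq_or_ne t 0 with rfl | ht
    · simp
    · field_simp
  have hmul (t : ℝ) : t⁻¹ ^ k * expNegInvGlue (t ^ 2) =
      t ^ k * ((t ^ 2)⁻¹ ^ k * expNegInvGlue (t ^ 2)) := by
    rw [hinv, mul_pow, mul_assoc]
  rw [funext hmul]
  exact (contDiff_id.pow k).mul (hglue.comp (contDiff_id.pow 2))

theorem integral_I₃_is_smooth_general {E : Type*} [NormedAddCommGroup E] [NormedSpace ℝ E]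
    {φ : ℝ → E} (hφ : φ.HasTemperateGrowth) :
    ContDiff ℝ ∞ fun p : ℝ × ℝ => if p.1 * p.2 = 0 then 0 else
      Real.exp (-((p.1 * p.2) ^ (-2 : ℤ))) • φ (Real.log |p.1|) := by
  refine contDiff_infty.2 fun n => ?_
  have hosc : ContDiff ℝ n fun p : ℝ × ℝ => p.1 ^ (n + 1) • φ (Real.log p.1) :=
    (contDiff_pow_succ_smul_comp_log hφ n).comp contDiff_fst
  have hflat : ContDiff ℝ n fun p : ℝ × ℝ =>
      (p.1 * p.2)⁻¹ ^ (n + 1) * expNegInvGlue ((p.1 * p.2) ^ 2) :=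
    (contDiff_inv_pow_mul_expNegInvGlue_sq (n + 1) (n := n)).comp (contDiff_fst.mul contDiff_snd)
  have hfactor (p : ℝ × ℝ) :
      (if p.1 * p.2 = 0 then 0 else Real.exp (-((p.1 * p.2) ^ (-2 : ℤ))) • φ (Real.log |p.1|)) =
        (p.2 ^ (n + 1) * ((p.1 * p.2)⁻¹ ^ (n + 1) * expNegInvGlue ((p.1 * p.2) ^ 2))) •
          p.1 ^ (n + 1) • φ (Real.log p.1) := by
    rw [expNegInvGlue_sq]
    split_ifs with hp
    · simp
    · obtain ⟨hx, hy⟩ := mul_ne_zero_iff.1 hp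
      have hcancel : p.2 ^ (n + 1) * (p.1 * p.2)⁻¹ ^ (n + 1) * p.1 ^ (n + 1) = 1 := by
        rw [← mul_pow, ← mul_pow, mul_inv_rev, mul_inv_cancel_left₀ hy, inv_mul_cancel₀ hx, one_pow]
      rw [smul_smul, Real.log_abs, ← mul_assoc, mul_right_comm, hcancel, one_mul]
  rw [funext hfactor]
  exact ((contDiff_snd.pow (n + 1)).mul hflat).smul hosc

/-!
STATEMENT 4: For λ > 1, the function F(x,y) = sin(2π ln|x| / ln λ)·exp(−(xy)^{−2})
for xy ≠ 0, extended by F(x,y) = 0 on {xy = 0}, is C^∞ on all of ℝ².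
-/

theorem integral_I₃_is_smooth (l : ℝ) (hl : 1 < l) (F : ℝ × ℝ → ℝ)
    (hF : F = fun p => if p.1 * p.2 = 0 then 0 else
      Real.sin (2 * Real.pi * Real.log |p.1| / Real.log l) *
        Real.exp (-((p.1 * p.2) ^ (-2 : ℤ)))) :
    ContDiff ℝ (⊤ : ℕ∞) F := by
  have hosc : (fun t => Real.sin (2 * Real.pi * t / Real.log l)).HasTemperateGrowth := by
    simp only [div_eq_mul_inv]
    exact hasTemperateGrowth_sin.comp (by fun_prop)
  simpa only [hF, smul_eq_mul, mul_comm (Real.exp _)] using integral_I₃_is_smooth_general hosc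
end

section
/- Let λ > 1 and a = ln λ. Define vector fields on ℝ³ by ξ₁(x,y,t) = (λ^t, λ^{−t}, 0), ξ₂(x,y,t) = (0,0,1) and v(x,y,t) = a·(λ^t, −λ^{−t}, 0). Then the Lie brackets satisfy [ξ₂, ξ₁] = v, [v, ξ₁] = 0 and [v, ξ₂] = −a²·ξ₁ identically on ℝ³. In particular v is an infinitesimal symmetry of the plane distribution spanned by ξ₁ and ξ₂ (its bracket with each of ξ₁, ξ₂ lies pointwise in their span). -/
/-!
STATEMENT 8: For λ > 1 and a = ln λ, the vector fields on ℝ³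
ξ₁(x,y,t) = (λ^t, λ^{−t}, 0), ξ₂(x,y,t) = (0,0,1), v(x,y,t) = a·(λ^t, −λ^{−t}, 0)
satisfy [ξ₂,ξ₁] = v, [v,ξ₁] = 0, [v,ξ₂] = −a²·ξ₁; in particular v (the Reeb field)
is an infinitesimal symmetry of the plane distribution spanned by ξ₁, ξ₂.
-/

/-- The Lie bracket of two vector fields on `ℝ³ = ℝ × ℝ × ℝ`, defined pointwise by
`[X,Y](p) = DY(p)·X(p) − DX(p)·Y(p)`. -/
noncomputable def lieBracketR3 (X Y : ℝ × ℝ × ℝ → ℝ × ℝ × ℝ) : ℝ × ℝ × ℝ → ℝ × ℝ × ℝ :=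
  fun p => fderiv ℝ Y p (X p) - fderiv ℝ X p (Y p)

/-!
All three fields depend on `p` only through the coordinate `t`. If `X = f ∘ t` and `Y = g ∘ t`, then
`[X, Y] = dt(X) g' - dt(Y) f'`, so brackets of fields tangent to the planes `t = const` vanish, and
bracketing with `ξ₂ = ∂ₜ` is differentiation in `t`. The result is therefore the system `γ' = δ`,
`δ' = a² γ` satisfied by the curves `γ`, `δ` with `ξ₁ = γ ∘ t` and `v = δ ∘ t`.
-/

open VectorField (lieBracket)

section CompFunctional

variable {𝕜 E F : Type*} [NontriviallyNormedField 𝕜] [NormedAddCommGroup E] [NormedSpace 𝕜 E]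
  [NormedAddCommGroup F] [NormedSpace 𝕜 F] (τ : E →L[𝕜] 𝕜) {p : E}

theorem fderiv_comp_functional_apply {g : 𝕜 → F} {g' : F} (hg : HasDerivAt g g' (τ p)) (w : E) :
    fderiv 𝕜 (fun q => g (τ q)) p w = τ w • g' := by
  have h : HasFDerivAt (fun q => g (τ q)) _ p := hg.hasFDerivAt.comp p τ.hasFDerivAt
  simp [h.fderiv]

variable {f g : 𝕜 → E} {f' g' : E}

theorem lieBracket_comp_functional (hf : HasDerivAt f f' (τ p)) (hg : HasDerivAt g g' (τ p)) :
    lieBracket 𝕜 (fun q => f (τ q)) (fun q => g (τ q)) p =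
      τ (f (τ p)) • g' - τ (g (τ p)) • f' := by
  rw [VectorField.lieBracket, fderiv_comp_functional_apply τ hf,
    fderiv_comp_functional_apply τ hg]

theorem lieBracket_comp_functional_eq_zero (hf : HasDerivAt f f' (τ p))
    (hg : HasDerivAt g g' (τ p)) (hτf : τ (f (τ p)) = 0) (hτg : τ (g (τ p)) = 0) :
    lieBracket 𝕜 (fun q => f (τ q)) (fun q => g (τ q)) p = 0 := by
  rw [lieBracket_comp_functional τ hf hg, hτf, hτg, zero_smul, zero_smul, sub_zero]

theorem lieBracket_const_comp_functional (c : E) (hg : HasDerivAt g g' (τ p)) :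
    lieBracket 𝕜 (fun _ => c) (fun q => g (τ q)) p = τ c • g' := by
  rw [lieBracket_comp_functional τ (hasDerivAt_const _ c) hg, smul_zero, sub_zero]

theorem lieBracket_comp_functional_const (c : E) (hf : HasDerivAt f f' (τ p)) :
    lieBracket 𝕜 (fun q => f (τ q)) (fun _ => c) p = -(τ c • f') := by
  rw [VectorField.lieBracket_swap, lieBracket_const_comp_functional τ c hf]

end CompFunctional

section HyperbolicCurve

variable {l : ℝ}

theorem hasDerivAt_const_rpow_neg (hl : 0 < l) (t : ℝ) :
    HasDerivAt (fun s : ℝ => l ^ (-s)) (-(Real.log l * l ^ (-t))) t := by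
  simpa using (hasDerivAt_neg t).const_rpow hl

theorem hasDerivAt_rpow_rpow_neg (hl : 0 < l) (t : ℝ) :
    HasDerivAt (fun s : ℝ => ((l ^ s, l ^ (-s), 0) : ℝ × ℝ × ℝ))
      (Real.log l • (l ^ t, -(l ^ (-t)), 0)) t := by
  simpa [mul_comm] using (Real.hasStrictDerivAt_const_rpow hl t).hasDerivAt.prodMk
    ((hasDerivAt_const_rpow_neg hl t).prodMk (hasDerivAt_const t (0 : ℝ)))

theorem hasDerivAt_log_smul_rpow_neg_rpow_neg (hl : 0 < l) (t : ℝ) :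
    HasDerivAt (fun s : ℝ => Real.log l • ((l ^ s, -(l ^ (-s)), 0) : ℝ × ℝ × ℝ))
      (Real.log l ^ 2 • (l ^ t, l ^ (-t), 0)) t := by
  have h := ((Real.hasStrictDerivAt_const_rpow hl t).hasDerivAt.prodMk
    ((hasDerivAt_const_rpow_neg hl t).neg.prodMk (hasDerivAt_const t (0 : ℝ)))).fun_const_smul
      (Real.log l)
  simpa [pow_two, mul_assoc, mul_comm (l ^ t)] using h

end HyperbolicCurve

theorem lieBracketR3_eq_lieBracket (X Y : ℝ × ℝ × ℝ → ℝ × ℝ × ℝ) :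
    lieBracketR3 X Y = lieBracket ℝ X Y :=
  rfl

/-- The coordinate `t` of `(x, y, t)`, as a continuous linear functional so that it can play the
role of `τ` above. -/
def coordT : ℝ × ℝ × ℝ →L[ℝ] ℝ :=
  (ContinuousLinearMap.snd ℝ ℝ ℝ).comp (ContinuousLinearMap.snd ℝ ℝ (ℝ × ℝ))

@[simp]
theorem coordT_apply (p : ℝ × ℝ × ℝ) : coordT p = p.2.2 :=
  rfl

theorem reeb_field_is_symmetry_general (l : ℝ) (hl : 0 < l) (a : ℝ) (ha : a = Real.log l)
    (ξ₁ ξ₂ v : ℝ × ℝ × ℝ → ℝ × ℝ × ℝ)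
    (hξ₁ : ξ₁ = fun p => (l ^ p.2.2, l ^ (-p.2.2), 0))
    (hξ₂ : ξ₂ = fun _ => (0, 0, 1))
    (hv : v = fun p => a • ((l ^ p.2.2, -(l ^ (-p.2.2)), 0) : ℝ × ℝ × ℝ)) :
    lieBracketR3 ξ₂ ξ₁ = v ∧
    lieBracketR3 v ξ₁ = 0 ∧
    lieBracketR3 v ξ₂ = (fun p => (-(a^2)) • ξ₁ p) ∧
    (∀ p : ℝ × ℝ × ℝ,
      lieBracketR3 v ξ₁ p ∈ Submodule.span ℝ {ξ₁ p, ξ₂ p} ∧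
      lieBracketR3 v ξ₂ p ∈ Submodule.span ℝ {ξ₁ p, ξ₂ p}) := by
  subst ha
  have hγ (p : ℝ × ℝ × ℝ) := hasDerivAt_rpow_rpow_neg hl (coordT p)
  have hδ (p : ℝ × ℝ × ℝ) := hasDerivAt_log_smul_rpow_neg_rpow_neg hl (coordT p)
  have hξ₂ξ₁ : lieBracketR3 ξ₂ ξ₁ = v := by
    funext p
    simpa [lieBracketR3_eq_lieBracket, hξ₁, hξ₂, hv] using
      lieBracket_const_comp_functional coordT (0, 0, 1) (hγ p)
  have hvξ₁ : lieBracketR3 v ξ₁ = 0 := by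
    funext p
    simpa [lieBracketR3_eq_lieBracket, hξ₁, hv] using
      lieBracket_comp_functional_eq_zero coordT (hδ p) (hγ p) (by simp) (by simp)
  have hvξ₂ : lieBracketR3 v ξ₂ = fun p => (-(Real.log l ^ 2)) • ξ₁ p := by
    funext p
    simpa [lieBracketR3_eq_lieBracket, hξ₁, hξ₂, hv] using
      lieBracket_comp_functional_const coordT (0, 0, 1) (hδ p)
  refine ⟨hξ₂ξ₁, hvξ₁, hvξ₂, fun p => ⟨?_, ?_⟩⟩
  · simp [hvξ₁]
  · rw [hvξ₂]
    exact Submodule.smul_mem _ _ (Submodule.mem_span_of_mem (Set.mem_insert _ _))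

theorem reeb_field_is_symmetry (l : ℝ) (hl : 1 < l) (a : ℝ) (ha : a = Real.log l)
    (ξ₁ ξ₂ v : ℝ × ℝ × ℝ → ℝ × ℝ × ℝ)
    (hξ₁ : ξ₁ = fun p => (l ^ p.2.2, l ^ (-p.2.2), 0))
    (hξ₂ : ξ₂ = fun _ => (0, 0, 1))
    (hv : v = fun p => a • ((l ^ p.2.2, -(l ^ (-p.2.2)), 0) : ℝ × ℝ × ℝ)) :
    lieBracketR3 ξ₂ ξ₁ = v ∧
    lieBracketR3 v ξ₁ = 0 ∧
    lieBracketR3 v ξ₂ = (fun p => (-(a^2)) • ξ₁ p) ∧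
    (∀ p : ℝ × ℝ × ℝ,
      lieBracketR3 v ξ₁ p ∈ Submodule.span ℝ {ξ₁ p, ξ₂ p} ∧
      lieBracketR3 v ξ₂ p ∈ Submodule.span ℝ {ξ₁ p, ξ₂ p}) :=
  reeb_field_is_symmetry_general l (one_pos.trans hl) a ha ξ₁ ξ₂ v hξ₁ hξ₂ hv
end

section
/- Every real Lie algebra of dimension 3 that is not semisimple contains a 2-dimensional abelian Lie subalgebra, i.e. a Lie subalgebra K with dim K = 2 on which the Lie bracket vanishes identically. -/
/-!
An element `x` of a nonzero abelian ideal satisfies `(ad x)² = 0`. The image of `ad x` then lies in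
its kernel, the centralizer of `x`, so by rank-nullity this centralizer has at least half the
dimension of `L`: it is more than the line through `x` as soon as `dim L ≥ 3`, and `x` together with
any other independent element of it spans an abelian plane. In dimension three a Lie algebra without
nonzero abelian ideals is simple, because a proper ideal has dimension at most two and is therefore
solvable.
-/

open Module LieAlgebra

section CommRing

variable {R L : Type*} [CommRing R] [LieRing L] [LieAlgebra R L]

theorem lie_mem_span_singleton_lie_of_mem_span_pair {a b x y : L}
    (hx : x ∈ Submodule.span R {a, b}) (hy : y ∈ Submodule.span R {a, b}) :
    ⁅x, y⁆ ∈ R ∙ ⁅a, b⁆ := by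
  obtain ⟨p, q, rfl⟩ := Submodule.mem_span_pair.mp hx
  obtain ⟨r, s, rfl⟩ := Submodule.mem_span_pair.mp hy
  refine Submodule.mem_span_singleton.mpr ⟨p * s - q * r, ?_⟩
  simp only [add_lie, lie_add, smul_lie, lie_smul, lie_self, ← lie_skew a b]
  module

theorem isSolvable_of_span_pair_eq_top {a b : L} (h : Submodule.span R {a, b} = ⊤) :
    IsSolvable L := by
  have hderived : derivedSeries R L 1 ≤ R ∙ ⁅a, b⁆ := by
    refine (coe_derivedSeries_one_eq R L).trans_le (Submodule.span_le.mpr ?_)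
    rintro _ ⟨x, y, rfl⟩
    exact lie_mem_span_singleton_lie_of_mem_span_pair (h ▸ Submodule.mem_top)
      (h ▸ Submodule.mem_top)
  have habelian : IsLieAbelian (derivedSeries R L 1) := by
    refine ⟨fun ⟨x, hx⟩ ⟨y, hy⟩ => Subtype.ext ?_⟩
    change ⁅x, y⁆ = 0
    obtain ⟨r, rfl⟩ := Submodule.mem_span_singleton.mp (hderived hx)
    obtain ⟨s, rfl⟩ := Submodule.mem_span_singleton.mp (hderived hy)
    rw [smul_lie, lie_smul, lie_self, smul_zero, smul_zero]
  exact IsSolvable.mk ((abelian_iff_derived_succ_eq_bot ⊤ 1).mp habelian)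

theorem ad_comp_ad_eq_zero_of_mem_abelian_ideal {I : LieIdeal R L} [IsLieAbelian I] {x : L}
    (hx : x ∈ I) : ad R L x ∘ₗ ad R L x = 0 := by
  ext y
  exact congrArg Subtype.val (trivial_lie_zero I I ⟨x, hx⟩ ⟨⁅x, y⁆, lie_mem_left R L I x y hx⟩)

theorem exists_isLieAbelian_finrank_eq_two_of_lie_eq_zero [Nontrivial R] {x y : L}
    (hli : LinearIndependent R ![x, y]) (hxy : ⁅x, y⁆ = 0) :
    ∃ K : LieSubalgebra R L, IsLieAbelian K ∧ finrank R K = 2 := by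
  have hyx : ⁅y, x⁆ = 0 := by rw [← lie_skew, hxy, neg_zero]
  have hcomm : ∀ᵉ (u ∈ ({x, y} : Set L)) (v ∈ ({x, y} : Set L)), ⁅u, v⁆ = 0 := by
    simp [hxy, hyx]
  refine ⟨LieSubalgebra.lieSpan R L {x, y}, LieSubalgebra.isLieAbelian_lieSpan_iff.mpr hcomm, ?_⟩
  calc finrank R (LieSubalgebra.lieSpan R L {x, y}).toSubmodule
    _ = finrank R (Submodule.span R (Set.range ![x, y])) := by
      rw [LieSubalgebra.coe_lieSpan_eq_span_of_forall_lie_eq_zero hcomm,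
        Matrix.range_cons_cons_empty]
    _ = 2 := by rw [finrank_span_eq_card hli, Fintype.card_fin]

end CommRing

section RankNullity

universe u v

theorem rank_le_two_mul_rank_ker_of_comp_self_eq_zero {R : Type u} {M : Type v} [Ring R]
    [AddCommGroup M] [Module R M] [HasRankNullity.{v} R] {f : M →ₗ[R] M}
    (hf : f ∘ₗ f = 0) : Module.rank R M ≤ 2 * Module.rank R (LinearMap.ker f) :=
  calc Module.rank R M
    _ = Module.rank R (LinearMap.range f) + Module.rank R (LinearMap.ker f) :=
      f.rank_range_add_rank_ker.symm
    _ ≤ Module.rank R (LinearMap.ker f) + Module.rank R (LinearMap.ker f) := by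
      gcongr
      exact Submodule.rank_mono (LinearMap.range_le_ker_iff.mpr hf)
    _ = 2 * Module.rank R (LinearMap.ker f) := (two_mul _).symm

end RankNullity

section Field

variable {F L : Type*} [Field F] [LieRing L] [LieAlgebra F L]

theorem linearIndependent_pair_of_lie_ne_zero {x y : L} (h : ⁅x, y⁆ ≠ 0) :
    LinearIndependent F ![x, y] := by
  have hx : x ≠ 0 := by
    rintro rfl
    exact h (zero_lie y)
  refine (LinearIndependent.pair_iff' hx).mpr ?_
  rintro c rfl
  exact h (by rw [lie_smul, lie_self, smul_zero])

theorem isSolvable_of_finrank_le_two [Module.Finite F L] (h : finrank F L ≤ 2) :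
    IsSolvable L := by
  by_cases habelian : IsLieAbelian L
  · infer_instance
  obtain ⟨x, y, hxy⟩ : ∃ x y : L, ⁅x, y⁆ ≠ 0 := by
    by_contra! hzero
    exact habelian ⟨hzero⟩
  have hli : LinearIndependent F ![x, y] := linearIndependent_pair_of_lie_ne_zero hxy
  refine isSolvable_of_span_pair_eq_top (R := F) (a := x) (b := y) ?_
  rw [← Matrix.range_cons_cons_empty x y ![]]
  exact hli.span_eq_top_of_card_eq_finrank
    (le_antisymm hli.fintype_card_le_finrank (by rwa [Fintype.card_fin]))

theorem isSimple_of_hasTrivialRadical_of_finrank_eq_three [HasTrivialRadical F L]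
    (h : finrank F L = 3) : IsSimple F L where
  eq_bot_or_eq_top I := by
    have : Module.Finite F L := finite_of_finrank_eq_succ h
    refine or_iff_not_imp_right.mpr fun hI => ?_
    have hlt : finrank F I < 3 :=
      h ▸ Submodule.finrank_lt fun htop => hI ((LieSubmodule.toSubmodule_eq_top I).mp htop)
    have : IsSolvable I := isSolvable_of_finrank_le_two (F := F) (Nat.le_of_lt_succ hlt)
    exact HasTrivialRadical.eq_bot_of_isSolvable I
  non_abelian _ := by
    have : Subsingleton L := subsingleton_of_hasTrivialRadical_lie_abelian F L
    simp [finrank_zero_of_subsingleton] at h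

theorem exists_linearIndependent_pair_lie_eq_zero_of_ad_comp_ad_eq_zero
    (hrank : 2 < Module.rank F L) {x : L} (hx : x ≠ 0) (had : ad F L x ∘ₗ ad F L x = 0) :
    ∃ y, LinearIndependent F ![x, y] ∧ ⁅x, y⁆ = 0 := by
  let centralizer : Submodule F L := LinearMap.ker (ad F L x)
  have hcentralizer : 1 < Module.rank F centralizer := by
    by_contra! hle
    refine hrank.not_ge ?_
    calc Module.rank F L
      _ ≤ 2 * Module.rank F centralizer := rank_le_two_mul_rank_ker_of_comp_self_eq_zero had
      _ ≤ 2 * 1 := by gcongr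
      _ = 2 := mul_one 2
  obtain ⟨⟨y, hxy⟩, hli⟩ := exists_linearIndependent_pair_of_one_lt_rank hcentralizer
    (x := ⟨x, lie_self x⟩) (Subtype.coe_ne_coe.mp hx)
  refine ⟨y, ?_, hxy⟩
  simpa [LinearIndependent.pair_iff, Subtype.ext_iff] using hli

end Field

theorem nonsemisimple_dim3_has_abelian_2dim_subalgebra_general
    {F L : Type*} [Field F] [LieRing L] [LieAlgebra F L]
    (hrank : 2 < Module.rank F L) (hrad : ¬ HasTrivialRadical F L) :
    ∃ K : LieSubalgebra F L, finrank F K = 2 ∧ ∀ x ∈ K, ∀ y ∈ K, ⁅x, y⁆ = 0 := by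
  rw [hasTrivialRadical_iff_no_abelian_ideals] at hrad
  push Not at hrad
  obtain ⟨I, habelian, hI⟩ := hrad
  obtain ⟨x, hxI, hx⟩ := I.toSubmodule.exists_mem_ne_zero_of_ne_bot
    (mt (LieSubmodule.toSubmodule_eq_bot I).mp hI)
  obtain ⟨y, hli, hxy⟩ := exists_linearIndependent_pair_lie_eq_zero_of_ad_comp_ad_eq_zero hrank hx
    (ad_comp_ad_eq_zero_of_mem_abelian_ideal hxI)
  obtain ⟨K, hK, hfinrank⟩ := exists_isLieAbelian_finrank_eq_two_of_lie_eq_zero hli hxy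
  exact ⟨K, hfinrank, fun u hu v hv =>
    congrArg Subtype.val (trivial_lie_zero K K ⟨u, hu⟩ ⟨v, hv⟩)⟩

/-!
STATEMENT 10: Every 3-dimensional real Lie algebra that is not semisimple contains
a 2-dimensional abelian Lie subalgebra.
-/

theorem nonsemisimple_dim3_has_abelian_2dim_subalgebra
    (L : Type*) [LieRing L] [LieAlgebra ℝ L] [Module.Finite ℝ L]
    (hdim : Module.finrank ℝ L = 3)
    (hss : ¬ LieAlgebra.IsSemisimple ℝ L) :
    ∃ K : LieSubalgebra ℝ L, Module.finrank ℝ K = 2 ∧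
      ∀ x ∈ K, ∀ y ∈ K, ⁅x, y⁆ = 0 := by
  refine nonsemisimple_dim3_has_abelian_2dim_subalgebra_general
    (by norm_num [← finrank_eq_rank, hdim]) fun _ => hss ?_
  exact (isSimple_of_hasTrivialRadical_of_finrank_eq_three hdim).instIsSemisimple
end

section
/- On ℝ⁶ with coordinates (q₁,q₂,q₃,p₁,p₂,p₃) define the Heisenberg sub-Riemannian Hamiltonian H = ½((p₁ + q₃p₂)² + p₃²). Then the canonical Poisson brackets satisfy {H, p₁} = 0, {H, p₂} = 0 and {p₁, p₂} = 0 identically, and the differentials dH, dp₁, dp₂ are linearly independent at every point of a dense open subset of ℝ⁶. Hence H, p₁, p₂ form a complete involutive set of first integrals for the Heisenberg sub-Riemannian geodesic flow. -/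
/-!
Bracketing with a momentum `pⱼ` differentiates along `qⱼ`, so `{F, pⱼ} = 0` as soon as `qⱼ` is a
cyclic coordinate of `F`; both `q₁` and `q₂` are cyclic for `H`, `p₁` and `p₂`. The differential of
`H` leaves the span of `dp₁` and `dp₂` as soon as `∂H/∂p₃ = p₃` is nonzero.
-/

section Coordinates

variable {𝕜 ι : Type*} [NontriviallyNormedField 𝕜]

lemma fderiv_coordinate (i : ι) (x : ι → 𝕜) :
    fderiv 𝕜 (fun y : ι → 𝕜 => y i) x = ContinuousLinearMap.proj i :=
  (hasFDerivAt_apply i x).fderiv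

lemma hasDerivAt_comp_update [Finite ι] [DecidableEq ι] {E : Type*} [NormedAddCommGroup E]
    [NormedSpace 𝕜 E] {F : (ι → 𝕜) → E} {x : ι → 𝕜} (hF : DifferentiableAt 𝕜 F x) (i : ι) :
    HasDerivAt (fun t => F (Function.update x i t)) (fderiv 𝕜 F x (Pi.single i 1)) (x i) := by
  cases nonempty_fintype ι
  have hFx : HasFDerivAt F (fderiv 𝕜 F x) (Function.update x i (x i)) := by
    simpa only [Function.update_eq_self] using hF.hasFDerivAt
  exact hFx.comp_hasDerivAt (x i) (hasDerivAt_update x i (x i))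

end Coordinates

section LinearIndependence

lemma linearIndependent_cons_of_dual {K V : Type*} [DivisionRing K] [AddCommGroup V] [Module K V]
    {n : ℕ} {v : Fin n → V} {w : V} (hv : LinearIndependent K v) (f : V →ₗ[K] K)
    (hfv : ∀ i, f (v i) = 0) (hfw : f w ≠ 0) :
    LinearIndependent K (Fin.cons w v : Fin (n + 1) → V) := by
  have hspan : Submodule.span K (Set.range v) ≤ f.ker :=
    Submodule.span_le.2 (Set.range_subset_iff.2 hfv)
  exact linearIndependent_finCons.2 ⟨hv, fun hw => hfw (hspan hw)⟩

lemma linearIndependent_proj {R ι : Type*} [CommRing R] [TopologicalSpace R]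
    [IsTopologicalRing R] :
    LinearIndependent R (fun i : ι => (ContinuousLinearMap.proj i : (ι → R) →L[R] R)) := by
  classical
  exact .of_pairwise_dual_eq_zero_one _
    (fun i => LinearMap.applyₗ (Pi.single i 1) ∘ₗ ContinuousLinearMap.coeLM R)
    (fun i j hij => by simp [hij.symm]) (fun i => by simp)

lemma linearIndependent_cons_proj {K ι : Type*} [Field K] [TopologicalSpace K]
    [IsTopologicalRing K] [DecidableEq ι] {n : ℕ} {s : Fin n → ι} (hs : Function.Injective s)
    {k : ι} (hk : ∀ i, s i ≠ k) {φ : (ι → K) →L[K] K} (hφ : φ (Pi.single k 1) ≠ 0) :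
    LinearIndependent K (Fin.cons φ (fun i => ContinuousLinearMap.proj (s i)) :
      Fin (n + 1) → (ι → K) →L[K] K) :=
  linearIndependent_cons_of_dual (linearIndependent_proj.comp s hs)
    (LinearMap.applyₗ (Pi.single k 1) ∘ₗ ContinuousLinearMap.coeLM K)
    (fun i => by simp [hk i]) hφ

end LinearIndependence

lemma pderiv6_eq_zero_of_forall_update {F : (Fin 6 → ℝ) → ℝ} {x : Fin 6 → ℝ} {i : Fin 6}
    (hF : DifferentiableAt ℝ F x) (hcyclic : ∀ t, F (Function.update x i t) = F x) :
    pderiv6 i F x = 0 := by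
  have h := hasDerivAt_comp_update hF i
  simp only [hcyclic] at h
  exact h.unique (hasDerivAt_const (x i) (F x))

lemma poisson6_momentum (F : (Fin 6 → ℝ) → ℝ) (j : Fin 3) (x : Fin 6 → ℝ) :
    poisson6 F (fun y => y (j.addNat 3)) x = pderiv6 (j.castAdd 3) F x := by
  simp only [poisson6, pderiv6, fderiv_coordinate, ContinuousLinearMap.proj_apply]
  fin_cases j <;> simp [Fin.sum_univ_three, Pi.single_apply]

lemma poisson6_momentum_eq_zero_of_forall_update {F : (Fin 6 → ℝ) → ℝ} {x : Fin 6 → ℝ} {j : Fin 3}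
    (hF : DifferentiableAt ℝ F x)
    (hcyclic : ∀ t, F (Function.update x (j.castAdd 3) t) = F x) :
    poisson6 F (fun y => y (j.addNat 3)) x = 0 :=
  (poisson6_momentum F j x).trans (pderiv6_eq_zero_of_forall_update hF hcyclic)

/-- The sub-Riemannian Hamiltonian `½((p₁ + q₃p₂)² + p₃²)` of the Heisenberg group, with
`(q₁, q₂, q₃, p₁, p₂, p₃)` encoded as `(x 0, …, x 5)`. -/
noncomputable def heisenbergHamiltonian (x : Fin 6 → ℝ) : ℝ :=
  (1 / 2) * ((x 3 + x 2 * x 4) ^ 2 + (x 5) ^ 2)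

lemma differentiable_heisenbergHamiltonian : Differentiable ℝ heisenbergHamiltonian := by
  unfold heisenbergHamiltonian
  fun_prop

lemma heisenbergHamiltonian_update_zero (x : Fin 6 → ℝ) (t : ℝ) :
    heisenbergHamiltonian (Function.update x 0 t) = heisenbergHamiltonian x := by
  simp [heisenbergHamiltonian]

lemma heisenbergHamiltonian_update_one (x : Fin 6 → ℝ) (t : ℝ) :
    heisenbergHamiltonian (Function.update x 1 t) = heisenbergHamiltonian x := by
  simp [heisenbergHamiltonian]

lemma pderiv6_five_heisenbergHamiltonian (x : Fin 6 → ℝ) :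
    pderiv6 5 heisenbergHamiltonian x = x 5 := by
  have hupdate (t : ℝ) : heisenbergHamiltonian (Function.update x 5 t) =
      (1 / 2) * ((x 3 + x 2 * x 4) ^ 2 + t ^ 2) := by
    simp [heisenbergHamiltonian]
  have hpartial := hasDerivAt_comp_update (differentiable_heisenbergHamiltonian x) 5
  simp only [hupdate] at hpartial
  have hquad := ((hasDerivAt_pow 2 (x 5)).const_add ((x 3 + x 2 * x 4) ^ 2)).const_mul (1 / 2)
  calc pderiv6 5 heisenbergHamiltonian x = 1 / 2 * ((2 : ℕ) * x 5 ^ (2 - 1)) :=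
        hpartial.unique hquad
    _ = x 5 := by simp

lemma linearIndependent_fderiv_heisenbergHamiltonian {x : Fin 6 → ℝ} (hx : x 5 ≠ 0) :
    LinearIndependent ℝ ![fderiv ℝ heisenbergHamiltonian x,
      fderiv ℝ (fun y : Fin 6 → ℝ => y 3) x, fderiv ℝ (fun y : Fin 6 → ℝ => y 4) x] := by
  have hdH : fderiv ℝ heisenbergHamiltonian x (Pi.single 5 1) ≠ 0 :=
    (pderiv6_five_heisenbergHamiltonian x).trans_ne hx
  have hmomenta : ![fderiv ℝ (fun y : Fin 6 → ℝ => y 3) x, fderiv ℝ (fun y => y 4) x] =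
      fun i => ContinuousLinearMap.proj (![3, 4] i) := by
    ext1 i
    fin_cases i <;> exact fderiv_coordinate _ x
  have hindep := linearIndependent_cons_proj (s := ![3, 4]) (by decide) (by decide) hdH
  rwa [← hmomenta] at hindep

theorem heisenberg_subriemannian_integrable
    (H P₁ P₂ : (Fin 6 → ℝ) → ℝ)
    (hH : H = fun x => (1/2) * ((x 3 + x 2 * x 4)^2 + (x 5)^2))
    (hP₁ : P₁ = fun x => x 3)
    (hP₂ : P₂ = fun x => x 4) :
    (∀ x, poisson6 H P₁ x = 0) ∧ (∀ x, poisson6 H P₂ x = 0) ∧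
    (∀ x, poisson6 P₁ P₂ x = 0) ∧
    ∃ U : Set (Fin 6 → ℝ), IsOpen U ∧ Dense U ∧ ∀ x ∈ U,
      LinearIndependent ℝ ![fderiv ℝ H x, fderiv ℝ P₁ x, fderiv ℝ P₂ x] := by
  obtain rfl : H = heisenbergHamiltonian := hH
  subst hP₁ hP₂
  refine ⟨fun x => ?_, fun x => ?_, fun x => ?_, {x | x 5 ≠ 0}, ?_, ?_, fun x hx => ?_⟩
  · exact poisson6_momentum_eq_zero_of_forall_update (j := 0)
      (differentiable_heisenbergHamiltonian x) (heisenbergHamiltonian_update_zero x)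
  · exact poisson6_momentum_eq_zero_of_forall_update (j := 1)
      (differentiable_heisenbergHamiltonian x) (heisenbergHamiltonian_update_one x)
  · exact poisson6_momentum_eq_zero_of_forall_update (j := 1)
      (differentiableAt_apply 3 x) (fun t => Function.update_of_ne (by decide) t x)
  · exact isOpen_ne_fun (continuous_apply 5) continuous_const
  · exact (dense_compl_singleton (0 : ℝ)).preimage (isOpenMap_eval 5)
  · exact linearIndependent_fderiv_heisenbergHamiltonian hx
end

section
/- Let T² = (ℝ/ℤ) × (ℝ/ℤ) and define the continuous maps F_B(x,y) = (x+y, y), F_{Bᵗ}(x,y) = (x, x+y), and F_A(x,y) = (2·x+y, x+y) on T². Then F_A = F_B ∘ F_{Bᵗ}, the topological entropies satisfy h_top(F_B) = 0 and h_top(F_{Bᵗ}) = 0, yet h_top(F_A) = log((3+√5)/2) > 0. In particular the inequality h_top(f∘g) ≤ h_top(f) + h_top(g) fails for these non-commuting maps. -/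
/-!
STATEMENT 13: On T² = (ℝ/ℤ) × (ℝ/ℤ), the maps F_B(x,y) = (x+y, y),
F_{Bᵗ}(x,y) = (x, x+y) and F_A(x,y) = (2x+y, x+y) satisfy F_A = F_B ∘ F_{Bᵗ},
h_top(F_B) = h_top(F_{Bᵗ}) = 0, yet h_top(F_A) = log((3+√5)/2) > 0; in particular
h_top(f∘g) ≤ h_top(f) + h_top(g) fails for these non-commuting maps.
(Topological entropy is Mathlib's Bowen–Dinaburg cover entropy on Set.univ.)
-/

open Dynamics

/-!
The upper bounds come from Lipschitz constants: comparing volumes, a `K`-Lipschitz map of a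
`d`-dimensional space has entropy at most `d log K` on bounded sets. Rescaling one coordinate turns
a shear into a `(1 + δ)`-Lipschitz map with `δ` arbitrarily small, so shears have entropy zero. The
cat map is diagonal along its eigenlines, with eigenvalues `φ²` and `ψ² < 1` where `φ` and `ψ` are
the golden ratio and its conjugate, so the product inequality bounds its entropy by `log φ²`.
Conversely, on its unstable line the cat map is multiplication by `φ²`, so about `φ²ⁿ` equally
spaced points of a short unstable segment are separated before time `n`.
-/

open Bornology ExpGrowth Filter Function MeasureTheory Metric Module Set
open scoped ENNReal goldenRatio NNReal Topology Uniformity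

section Product

variable {X Y : Type*} {S : X → X} {T : Y → Y} {F : Set X} {G : Set Y} {U : SetRel X X}
  {V : SetRel Y Y} {n : ℕ}

lemma dynEntourage_prodMap (S : X → X) (T : Y → Y) (U : SetRel X X) (V : SetRel Y Y) (n : ℕ) :
    dynEntourage (Prod.map S T) (entourageProd U V) n =
      entourageProd (dynEntourage S U n) (dynEntourage T V n) := by
  ext ⟨p, q⟩
  simp only [mem_dynEntourage, mem_entourageProd, Prod.map_iterate, Prod.map_fst, Prod.map_snd,
    forall_and]

lemma isDynCoverOf_prodMap {s : Set X} {t : Set Y} (hs : IsDynCoverOf S F U n s)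
    (ht : IsDynCoverOf T G V n t) :
    IsDynCoverOf (Prod.map S T) (F ×ˢ G) (entourageProd U V) n (s ×ˢ t) := by
  rintro ⟨x, y⟩ ⟨hx, hy⟩
  obtain ⟨a, ha, hxa⟩ := hs hx
  obtain ⟨b, hb, hyb⟩ := ht hy
  refine ⟨(a, b), ⟨ha, hb⟩, ?_⟩
  rw [dynEntourage_prodMap]
  exact ⟨hxa, hyb⟩

lemma coverMincard_prodMap_le (hF : F.Nonempty) (hG : G.Nonempty) (U : SetRel X X)
    (V : SetRel Y Y) (n : ℕ) :
    coverMincard (Prod.map S T) (F ×ˢ G) (entourageProd U V) n ≤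
      coverMincard S F U n * coverMincard T G V n := by
  have hF_ne_zero := (coverMincard_eq_zero_iff S F U n).not.2 hF.ne_empty
  have hG_ne_zero := (coverMincard_eq_zero_iff T G V n).not.2 hG.ne_empty
  rcases eq_or_ne (coverMincard S F U n) ⊤ with h | hF_fin
  · rw [h, ENat.top_mul hG_ne_zero]
    exact le_top
  rcases eq_or_ne (coverMincard T G V n) ⊤ with h | hG_fin
  · rw [h, ENat.mul_top hF_ne_zero]
    exact le_top
  obtain ⟨s, hs, hs_card⟩ := (coverMincard_finite_iff S F U n).1 hF_fin.lt_top
  obtain ⟨t, ht, ht_card⟩ := (coverMincard_finite_iff T G V n).1 hG_fin.lt_top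
  have hst : IsDynCoverOf (Prod.map S T) (F ×ˢ G) (entourageProd U V) n
      ((s ×ˢ t : Finset (X × Y)) : Set (X × Y)) := by
    rw [Finset.coe_product]
    exact isDynCoverOf_prodMap hs ht
  rw [← hs_card, ← ht_card, ← Nat.cast_mul, ← Finset.card_product]
  exact hst.coverMincard_le_card

lemma coverEntropy_prodMap_le [UniformSpace X] [UniformSpace Y] (S : X → X) (T : Y → Y)
    (F : Set X) (G : Set Y) :
    coverEntropy (Prod.map S T) (F ×ˢ G) ≤ coverEntropy S F + coverEntropy T G := by
  rcases F.eq_empty_or_nonempty with rfl | hF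
  · rw [empty_prod, coverEntropy_empty]
    exact bot_le
  rcases G.eq_empty_or_nonempty with rfl | hG
  · rw [prod_empty, coverEntropy_empty]
    exact bot_le
  refine iSup₂_le fun W hW ↦ ?_
  obtain ⟨U, hU, V, hV, hUV⟩ := entourageProd_subset hW
  have hU_ne_bot := (coverEntropyEntourage_nonneg S hF U).trans_lt' EReal.bot_lt_zero |>.ne'
  have hV_ne_bot := (coverEntropyEntourage_nonneg T hG V).trans_lt' EReal.bot_lt_zero |>.ne'
  calc coverEntropyEntourage (Prod.map S T) (F ×ˢ G) W
      ≤ coverEntropyEntourage (Prod.map S T) (F ×ˢ G) (entourageProd U V) :=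
        coverEntropyEntourage_antitone _ _ hUV
    _ ≤ expGrowthSup ((fun n ↦ (coverMincard S F U n : ℝ≥0∞)) *
          fun n ↦ (coverMincard T G V n : ℝ≥0∞)) := by
        refine expGrowthSup_monotone fun n ↦ ?_
        rw [Pi.mul_apply, ← ENat.toENNReal_mul]
        exact ENat.toENNReal_mono (coverMincard_prodMap_le hF hG U V n)
    _ ≤ coverEntropyEntourage S F U + coverEntropyEntourage T G V :=
        expGrowthSup_mul_le (.inl hU_ne_bot) (.inr hV_ne_bot)
    _ ≤ coverEntropy S F + coverEntropy T G :=
        add_le_add (coverEntropyEntourage_le_coverEntropy S F hU)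
          (coverEntropyEntourage_le_coverEntropy T G hV)

end Product

lemma coverEntropy_le_of_semiconj_continuousLinearEquiv {E E' : Type*}
    [SeminormedAddCommGroup E] [NormedSpace ℝ E] [SeminormedAddCommGroup E'] [NormedSpace ℝ E']
    {S : E → E} {T : E' → E'} (L : E ≃L[ℝ] E') (hL : Semiconj L S T) {c : EReal}
    (hS : ∀ F, IsBounded F → coverEntropy S F ≤ c) {F : Set E'} (hF : IsBounded F) :
    coverEntropy T F ≤ c :=
  calc coverEntropy T F = coverEntropy T (L '' (L.symm '' F)) := by rw [L.image_symm_image]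
    _ ≤ coverEntropy S (L.symm '' F) :=
        coverEntropy_image_le_of_uniformContinuous hL L.lipschitz.uniformContinuous _
    _ ≤ c := hS _ (L.symm.lipschitz.isBounded_image hF)

section Lipschitz

lemma coverMincard_le_externalCoveringNumber {X : Type*} [PseudoEMetricSpace X] {T : X → X}
    {K : ℝ≥0} (hT : LipschitzWith K T) (hK : 1 ≤ K) (F : Set X) (ε : ℝ≥0) (n : ℕ) :
    coverMincard T F {p | edist p.1 p.2 ≤ ε} n ≤ externalCoveringNumber (ε / K ^ n) F := by
  have isDynCoverOf_of_isCover {s : Set X} (hs : IsCover (ε / K ^ n) F s) :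
      IsDynCoverOf T F {p | edist p.1 p.2 ≤ ε} n s := by
    intro x hx
    obtain ⟨y, hy, hxy : edist x y ≤ (ε / K ^ n : ℝ≥0)⟩ := hs hx
    refine ⟨y, hy, mem_dynEntourage.2 fun k hk ↦ ?_⟩
    calc edist (T^[k] x) (T^[k] y) ≤ (K ^ k : ℝ≥0) * edist x y := hT.iterate k x y
      _ ≤ (K ^ n : ℝ≥0) * (ε / K ^ n : ℝ≥0) := by gcongr
      _ = ε := by rw [← ENNReal.coe_mul, mul_div_cancel₀ _ (by positivity)]
  refine le_iInf₂ fun s hs ↦ ?_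
  rcases s.finite_or_infinite with hs_fin | hs_inf
  · lift s to Finset X using hs_fin
    rw [encard_coe_eq_coe_finsetCard]
    exact (isDynCoverOf_of_isCover hs).coverMincard_le_card
  · simp [hs_inf.encard_eq]

lemma packingNumber_mul_measure_ball_le {E : Type*} [NormedAddCommGroup E] [MeasurableSpace E]
    [BorelSpace E] (μ : Measure E) [μ.IsAddHaarMeasure] (δ : ℝ≥0) (A : Set E) :
    packingNumber δ A * μ (ball 0 (δ / 2)) ≤ μ (thickening (δ / 2) A) := by
  simp_rw [packingNumber, ENat.toENNReal_iSup, ENNReal.iSup_mul, iSup_le_iff]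
  intro C hCA hC
  have hdisj : Pairwise (Disjoint on fun x : C ↦ ball (x : E) (δ / 2)) := by
    intro x y hxy
    refine ball_disjoint_ball ?_
    have hlt : (δ : ℝ≥0∞) < edist (x : E) y := hC x.2 y.2 (Subtype.coe_injective.ne hxy)
    rw [edist_nndist, ENNReal.coe_lt_coe] at hlt
    rw [add_halves, dist_nndist]
    exact_mod_cast hlt.le
  calc (C.encard : ℝ≥0∞) * μ (ball 0 (δ / 2))
      = ∑' x : C, μ (ball (x : E) (δ / 2)) := by
        simp_rw [Measure.addHaar_ball_center, ENNReal.tsum_const, Set.encard]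
    _ ≤ μ (⋃ x : C, ball (x : E) (δ / 2)) :=
        tsum_meas_le_meas_iUnion_of_disjoint μ (fun _ ↦ measurableSet_ball) hdisj
    _ ≤ μ (thickening (δ / 2) A) := by
        refine measure_mono (iUnion_subset fun x ↦ ?_)
        exact ball_subset_thickening (hCA x.2) _

variable {E : Type*} [NormedAddCommGroup E] [NormedSpace ℝ E] [FiniteDimensional ℝ E]

lemma exists_packingNumber_mul_pow_finrank_le {A : Set E} (hA : IsBounded A) :
    ∃ C ≠ ∞, ∀ δ : ℝ≥0, 0 < δ → δ ≤ 1 → packingNumber δ A * (δ : ℝ≥0∞) ^ finrank ℝ E ≤ C := by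
  borelize E
  let μ : Measure E := Measure.addHaar
  let c := μ (ball 0 2⁻¹)
  have hc_ne_zero : c ≠ 0 := (measure_ball_pos μ 0 (by norm_num)).ne'
  have hc_ne_top : c ≠ ∞ := measure_ball_lt_top.ne
  refine ⟨μ (thickening 1 A) / c, ENNReal.div_ne_top hA.thickening.measure_lt_top.ne hc_ne_zero,
    fun δ hδ hδ_le ↦ ?_⟩
  have hball : μ (ball 0 (δ / 2)) = (δ : ℝ≥0∞) ^ finrank ℝ E * c := by
    have h := Measure.addHaar_ball_mul_of_pos μ (0 : E) (NNReal.coe_pos.2 hδ) 2⁻¹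
    rw [ENNReal.ofReal_pow δ.coe_nonneg, ENNReal.ofReal_coe_nnreal] at h
    rw [div_eq_mul_inv, h]
  rw [ENNReal.le_div_iff_mul_le (.inl hc_ne_zero) (.inl hc_ne_top), mul_assoc, ← hball]
  refine (packingNumber_mul_measure_ball_le μ δ A).trans (measure_mono (thickening_mono ?_ A))
  have : (δ : ℝ) ≤ 1 := hδ_le
  linarith [δ.2]

lemma exists_coverMincard_le_mul_pow {T : E → E} {K : ℝ≥0} (hT : LipschitzWith K T) (hK : 1 ≤ K)
    {F : Set E} (hF : IsBounded F) {ε : ℝ≥0} (hε : 0 < ε) :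
    ∃ C ≠ ∞, ∀ n, coverMincard T F {p | edist p.1 p.2 ≤ ε} n ≤
      C * ((K : ℝ≥0∞) ^ finrank ℝ E) ^ n := by
  set d := finrank ℝ E
  obtain ⟨C, hC_ne_top, hC⟩ := exists_packingNumber_mul_pow_finrank_le hF
  let δ := min ε 1
  have hδ : 0 < δ := lt_min hε one_pos
  refine ⟨C / (δ : ℝ≥0∞) ^ d, ENNReal.div_ne_top hC_ne_top (by positivity), fun n ↦ ?_⟩
  have hδ_div : δ / K ^ n * K ^ n = δ := div_mul_cancel₀ _ (by positivity)
  have hδ_div_le : δ / K ^ n ≤ 1 :=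
    div_le_one_of_le₀ ((min_le_right ε 1).trans (one_le_pow₀ hK)) zero_le
  have hcover : coverMincard T F {p | edist p.1 p.2 ≤ ε} n ≤ packingNumber (δ / K ^ n) F :=
    calc coverMincard T F {p | edist p.1 p.2 ≤ ε} n
        ≤ externalCoveringNumber (ε / K ^ n) F :=
          coverMincard_le_externalCoveringNumber hT hK F ε n
      _ ≤ externalCoveringNumber (δ / K ^ n) F :=
          externalCoveringNumber_anti (by gcongr; exact min_le_left ε 1)
      _ ≤ coveringNumber (δ / K ^ n) F := externalCoveringNumber_le_coveringNumber _ F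
      _ ≤ packingNumber (δ / K ^ n) F := coveringNumber_le_packingNumber _ F
  rw [← ENNReal.mul_div_right_comm, ENNReal.le_div_iff_mul_le (.inl (by positivity))
    (.inl (by finiteness))]
  calc (coverMincard T F {p | edist p.1 p.2 ≤ ε} n : ℝ≥0∞) * (δ : ℝ≥0∞) ^ d
      ≤ packingNumber (δ / K ^ n) F * (δ : ℝ≥0∞) ^ d := by gcongr
    _ = packingNumber (δ / K ^ n) F * (↑(δ / K ^ n) : ℝ≥0∞) ^ d * ((K : ℝ≥0∞) ^ d) ^ n := by
      nth_rw 2 [← hδ_div]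
      push_cast
      ring
    _ ≤ C * ((K : ℝ≥0∞) ^ d) ^ n := by
      gcongr
      exact hC _ (div_pos hδ (by positivity)) hδ_div_le

theorem coverEntropy_le_finrank_mul_log {T : E → E} {K : ℝ≥0} (hT : LipschitzWith K T)
    (hK : 1 ≤ K) {F : Set E} (hF : IsBounded F) :
    coverEntropy T F ≤ ((finrank ℝ E * Real.log K : ℝ) : EReal) := by
  rw [coverEntropy_eq_iSup_basis uniformity_basis_edist_nnreal_le]
  refine iSup₂_le fun ε hε ↦ ?_
  obtain ⟨C, hC_ne_top, hC⟩ := exists_coverMincard_le_mul_pow hT hK hF hε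
  calc coverEntropyEntourage T F {p | edist p.1 p.2 ≤ ε}
      ≤ expGrowthSup fun n ↦ ((K : ℝ≥0∞) ^ finrank ℝ E) ^ n :=
        expGrowthSup_le_of_eventually_le hC_ne_top (.of_forall hC)
    _ = ((finrank ℝ E * Real.log K : ℝ) : EReal) := by
        rw [expGrowthSup_pow, ENNReal.log_pow, ENNReal.log_of_nnreal (one_pos.trans_le hK).ne']
        norm_cast

theorem coverEntropy_prodMap_le_finrank_mul_log {E' : Type*} [NormedAddCommGroup E']
    [NormedSpace ℝ E'] [FiniteDimensional ℝ E'] {S : E → E} {T : E' → E'} {K L : ℝ≥0}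
    (hS : LipschitzWith K S) (hK : 1 ≤ K) (hT : LipschitzWith L T) (hL : 1 ≤ L)
    {F : Set (E × E')} (hF : IsBounded F) :
    coverEntropy (Prod.map S T) F ≤
      ((finrank ℝ E * Real.log K + finrank ℝ E' * Real.log L : ℝ) : EReal) := by
  rw [EReal.coe_add]
  calc coverEntropy (Prod.map S T) F
      ≤ coverEntropy (Prod.map S T) ((Prod.fst '' F) ×ˢ (Prod.snd '' F)) :=
        coverEntropy_monotone _ subset_prod
    _ ≤ coverEntropy S (Prod.fst '' F) + coverEntropy T (Prod.snd '' F) :=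
        coverEntropy_prodMap_le S T _ _
    _ ≤ _ := add_le_add (coverEntropy_le_finrank_mul_log hS hK hF.image_fst)
        (coverEntropy_le_finrank_mul_log hT hL hF.image_snd)

end Lipschitz

section ExpandingLeaf

variable {X : Type*} [PseudoMetricSpace X] {T : X → X}

lemma card_le_netMaxcard_of_separated {ι : Type*} {I : Finset ι} {x : ι → X} {F : Set X} {ε : ℝ}
    {n : ℕ} (hε : 0 < ε) (hx : ∀ i ∈ I, x i ∈ F)
    (hsep : ∀ i ∈ I, ∀ j ∈ I, (∀ k < n, dist (T^[k] (x i)) (T^[k] (x j)) < 2 * ε) → i = j) :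
    I.card ≤ netMaxcard T F {p | dist p.1 p.2 < ε} n := by
  classical
  have hinj : InjOn x I := by
    intro i hi j hj hij
    refine hsep i hi j hj fun k _ ↦ ?_
    rw [hij, dist_self]
    positivity
  rw [← Finset.card_image_of_injOn hinj]
  refine IsDynNetIn.card_le_netMaxcard ⟨?_, ?_⟩
  · rw [Finset.coe_image, image_subset_iff]
    exact hx
  rw [Finset.coe_image]
  rintro _ ⟨i, hi, rfl⟩ _ ⟨j, hj, rfl⟩ hij
  refine disjoint_left.2 fun z hiz hjz ↦ hij (congrArg x (hsep i hi j hj fun k hk ↦ ?_))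
  have hiz' : dist (T^[k] (x i)) (T^[k] z) < ε := mem_dynEntourage.1 hiz k hk
  have hjz' : dist (T^[k] (x j)) (T^[k] z) < ε := mem_dynEntourage.1 hjz k hk
  linarith [dist_triangle_right (T^[k] (x i)) (T^[k] (x j)) (T^[k] z)]

variable {f : ℝ → X} {r c ρ : ℝ}

lemma pow_mul_abs_sub_lt (hf : Semiconj f (r * ·) T) (hr : 0 < r) (hc : 0 < c)
    (hexp : ∀ s t, |s - t| < ρ → c * |s - t| ≤ dist (f s) (f t)) {s t : ℝ} (hst : |s - t| < ρ)
    {n : ℕ} (hdist : ∀ k < n, dist (T^[k] (f s)) (T^[k] (f t)) < c * (ρ / r)) :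
    r ^ n * |s - t| < ρ := by
  induction n with
  | zero => simpa using hst
  | succ n ih =>
    have hiter (u : ℝ) : T^[n] (f u) = f (r ^ n * u) := by
      rw [← hf.iterate_right n u, mul_left_iterate]
    have habs : |r ^ n * s - r ^ n * t| = r ^ n * |s - t| := by
      rw [← mul_sub, abs_mul, abs_of_pos (pow_pos hr n)]
    have hclose := hdist n n.lt_succ_self
    rw [hiter, hiter] at hclose
    have hfar := hexp (r ^ n * s) (r ^ n * t)
      (habs ▸ ih fun k hk ↦ hdist k (hk.trans n.lt_succ_self))
    have hlt : r ^ n * |s - t| < ρ / r :=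
      habs ▸ lt_of_mul_lt_mul_left (hfar.trans_lt hclose) hc.le
    rw [pow_succ', mul_assoc]
    exact (lt_div_iff₀' hr).1 hlt

lemma natCeil_pow_le_netMaxcard (hf : Semiconj f (r * ·) T) (hr : 0 < r) (hc : 0 < c) (hρ : 0 < ρ)
    (hexp : ∀ s t, |s - t| < ρ → c * |s - t| ≤ dist (f s) (f t)) (n : ℕ) :
    ⌈r ^ n⌉₊ ≤ netMaxcard T (f '' Ico 0 ρ) {p | dist p.1 p.2 < c * (ρ / r) / 2} n := by
  have hrn : 0 < r ^ n := pow_pos hr n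
  let u (i : ℕ) : ℝ := i * (ρ / r ^ n)
  have hu_mem : ∀ i ∈ Finset.range ⌈r ^ n⌉₊, u i ∈ Ico 0 ρ := by
    intro i hi
    refine ⟨by positivity, ?_⟩
    calc u i < r ^ n * (ρ / r ^ n) :=
          mul_lt_mul_of_pos_right (Nat.lt_ceil.1 (Finset.mem_range.1 hi)) (div_pos hρ hrn)
      _ = ρ := mul_div_cancel₀ ρ hrn.ne'
  have hu_dist (i j : ℕ) : r ^ n * |u i - u j| = |(i : ℝ) - j| * ρ := by
    rw [← sub_mul, abs_mul, abs_of_pos (div_pos hρ hrn)]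
    field_simp
  rw [← Finset.card_range ⌈r ^ n⌉₊]
  refine card_le_netMaxcard_of_separated (by positivity)
    (fun i hi ↦ mem_image_of_mem f (hu_mem i hi)) fun i hi j hj hij ↦ ?_
  simp only [mul_div_cancel₀ _ (two_ne_zero (α := ℝ))] at hij
  have hlt := pow_mul_abs_sub_lt hf hr hc hexp (abs_sub_lt_of_nonneg_of_lt (hu_mem i hi).1
    (hu_mem i hi).2 (hu_mem j hj).1 (hu_mem j hj).2) hij
  rw [hu_dist, mul_lt_iff_lt_one_left hρ] at hlt
  have hlt_int : |(i : ℤ) - j| < 1 := by exact_mod_cast hlt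
  exact_mod_cast sub_eq_zero.1 (Int.abs_lt_one_iff.1 hlt_int)

theorem log_le_coverEntropy_image_Ico (hf : Semiconj f (r * ·) T) (hr : 0 < r) (hc : 0 < c)
    (hρ : 0 < ρ) (hexp : ∀ s t, |s - t| < ρ → c * |s - t| ≤ dist (f s) (f t)) :
    (Real.log r : EReal) ≤ coverEntropy T (f '' Ico 0 ρ) := by
  rw [← ENNReal.log_ofReal_of_pos hr, ← expGrowthSup_pow]
  refine le_trans (expGrowthSup_monotone fun n ↦ ?_)
    (netEntropyEntourage_le_coverEntropy T _
      (dist_mem_uniformity (ε := c * (ρ / r) / 2) (by positivity)))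
  calc ENNReal.ofReal r ^ n = ENNReal.ofReal (r ^ n) := (ENNReal.ofReal_pow hr.le n).symm
    _ ≤ (⌈r ^ n⌉₊ : ℝ≥0∞) := ENNReal.ofReal_le_of_le_toReal (by simpa using Nat.le_ceil _)
    _ ≤ _ := by exact_mod_cast natCeil_pow_le_netMaxcard hf hr hc hρ hexp n

end ExpandingLeaf

section TorusMaps

/-- The shear of the first coordinate, the action of `B = !![1, 1; 0, 1]` on `G × G`. -/
def shearFst {G : Type*} [Add G] (p : G × G) : G × G := (p.1 + p.2, p.2)

/-- The shear of the second coordinate, the action of `Bᵗ = !![1, 0; 1, 1]` on `G × G`. -/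
def shearSnd {G : Type*} [Add G] (p : G × G) : G × G := (p.1, p.1 + p.2)

/-- Arnold's cat map, the action of `A = !![2, 1; 1, 1]` on `G × G`; twice `x` is written `x + x`
to make sense for a bare addition. -/
def catMap {G : Type*} [Add G] (p : G × G) : G × G := (p.1 + p.1 + p.2, p.1 + p.2)

lemma catMap_eq_shearFst_comp_shearSnd {G : Type*} [AddSemigroup G] :
    (catMap : G × G → G × G) = shearFst ∘ shearSnd := by
  funext p
  simp only [catMap, shearFst, shearSnd, comp_apply, add_assoc]

lemma semiconj_swap_shearSnd_shearFst {G : Type*} [AddCommMagma G] :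
    Semiconj Prod.swap (shearSnd : G × G → G × G) shearFst :=
  fun p ↦ Prod.ext (add_comm p.1 p.2) rfl

lemma semiconj_prodMap_shearSnd {G H 𝓕 : Type*} [Add G] [Add H] [FunLike 𝓕 G H]
    [AddHomClass 𝓕 G H] (f : 𝓕) : Semiconj (Prod.map f f) shearSnd shearSnd := fun p ↦ by
  simp [shearSnd]

lemma semiconj_prodMap_catMap {G H 𝓕 : Type*} [Add G] [Add H] [FunLike 𝓕 G H]
    [AddHomClass 𝓕 G H] (f : 𝓕) : Semiconj (Prod.map f f) catMap catMap := fun p ↦ by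
  simp [catMap]

end TorusMaps

section Shear

lemma lipschitzWith_prodMk_add_smul {E : Type*} [SeminormedAddCommGroup E] [NormedSpace ℝ E]
    (δ : ℝ≥0) :
    LipschitzWith (1 + δ) fun p : E × E ↦ (p.1, p.2 + (δ : ℝ) • p.1) := by
  have hsnd : LipschitzWith (1 + δ) fun p : E × E ↦ p.2 + (δ : ℝ) • p.1 := by
    have h := LipschitzWith.prod_snd.add
      ((lipschitzWith_smul (β := E) (δ : ℝ)).comp (LipschitzWith.prod_fst (β := E)))
    simpa using h
  have hfst : LipschitzWith (1 + δ) (Prod.fst : E × E → E) :=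
    LipschitzWith.prod_fst.weaken le_self_add
  simpa using hfst.prodMk hsnd

variable {E : Type*} [NormedAddCommGroup E] [NormedSpace ℝ E] [FiniteDimensional ℝ E]
  {F : Set (E × E)}

lemma coverEntropy_shearSnd_le_mul_log (hF : IsBounded F) {δ : ℝ≥0} (hδ : 0 < δ) :
    coverEntropy shearSnd F ≤ ((finrank ℝ (E × E) * Real.log (1 + δ) : ℝ) : EReal) := by
  let u : ℝˣ := Units.mk0 (δ : ℝ)⁻¹ (inv_ne_zero (NNReal.coe_ne_zero.2 hδ.ne'))
  let L : (E × E) ≃L[ℝ] E × E :=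
    (ContinuousLinearEquiv.refl ℝ E).prodCongr (ContinuousLinearEquiv.smulLeft u)
  have hL : Semiconj L (fun p : E × E ↦ (p.1, p.2 + (δ : ℝ) • p.1)) shearSnd := by
    intro p
    simp [L, u, shearSnd, Units.smul_def, smul_smul, hδ.ne', add_comm]
  refine coverEntropy_le_of_semiconj_continuousLinearEquiv L hL (fun G hG ↦ ?_) hF
  simpa using coverEntropy_le_finrank_mul_log (lipschitzWith_prodMk_add_smul δ) le_self_add hG

theorem coverEntropy_shearSnd_le_zero (hF : IsBounded F) : coverEntropy shearSnd F ≤ 0 := by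
  have hlim : Tendsto (fun δ : ℝ≥0 ↦ ((finrank ℝ (E × E) * Real.log (1 + δ) : ℝ) : EReal))
      (𝓝[>] 0) (𝓝 0) := by
    have hcont : ContinuousAt
        (fun δ : ℝ≥0 ↦ ((finrank ℝ (E × E) * Real.log (1 + δ) : ℝ) : EReal)) 0 :=
      continuous_coe_real_ereal.continuousAt.comp (by fun_prop (disch := norm_num))
    simpa using hcont.tendsto.mono_left nhdsWithin_le_nhds
  exact ge_of_tendsto hlim (eventually_mem_nhdsWithin.mono fun δ hδ ↦
    coverEntropy_shearSnd_le_mul_log hF hδ)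

end Shear

section CatMap

/-- The coordinates on the plane along the eigenvectors `(φ, 1)` and `(ψ, 1)` of the cat map. -/
noncomputable def eigenCoords : (ℝ × ℝ) ≃ₗ[ℝ] ℝ × ℝ where
  toFun p := (φ * p.1 + ψ * p.2, p.1 + p.2)
  invFun p := ((p.1 - ψ * p.2) / (φ - ψ), (φ * p.2 - p.1) / (φ - ψ))
  map_add' p q := by
    ext <;> simp only [Prod.fst_add, Prod.snd_add] <;> ring
  map_smul' a p := by
    ext <;> simp only [Prod.smul_fst, Prod.smul_snd, smul_eq_mul, RingHom.id_apply] <;> ring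
  left_inv p := by
    have : φ - ψ ≠ 0 := by simp
    ext <;> field_simp <;> ring
  right_inv p := by
    have : φ - ψ ≠ 0 := by simp
    ext <;> field_simp <;> ring

lemma semiconj_eigenCoords :
    Semiconj eigenCoords (Prod.map (φ ^ 2 * ·) (ψ ^ 2 * ·)) catMap := by
  intro p
  ext
  · simp only [eigenCoords, catMap, LinearEquiv.coe_mk, LinearMap.coe_mk, AddHom.coe_mk,
      Prod.map_fst, Prod.map_snd]
    linear_combination p.1 * (φ + 1) * Real.goldenRatio_sq + p.2 * (ψ + 1) * Real.goldenConj_sq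
  · simp only [eigenCoords, catMap, LinearEquiv.coe_mk, LinearMap.coe_mk, AddHom.coe_mk,
      Prod.map_fst, Prod.map_snd]
    linear_combination p.1 * Real.goldenRatio_sq + p.2 * Real.goldenConj_sq

lemma semiconj_eigenline : Semiconj (fun t : ℝ ↦ (φ * t, t)) (φ ^ 2 * ·) catMap := fun t ↦ by
  simpa [eigenCoords] using semiconj_eigenCoords (t, 0)

theorem coverEntropy_catMap_le {F : Set (ℝ × ℝ)} (hF : IsBounded F) :
    coverEntropy catMap F ≤ (Real.log (φ ^ 2) : EReal) := by
  have hφ_one : 1 ≤ ‖φ ^ 2‖₊ := by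
    rw [nnnorm_pow]
    exact one_le_pow₀ (Real.one_lt_goldenRatio.le.trans (Real.le_norm_self φ))
  have hψ_one : ‖ψ ^ 2‖₊ ≤ 1 := by
    rw [nnnorm_pow]
    exact pow_le_one₀ zero_le
      (abs_le.2 ⟨Real.neg_one_lt_goldenConj.le, Real.goldenConj_neg.le.trans zero_le_one⟩)
  refine coverEntropy_le_of_semiconj_continuousLinearEquiv eigenCoords.toContinuousLinearEquiv
    semiconj_eigenCoords (fun G hG ↦ ?_) hF
  have h := coverEntropy_prodMap_le_finrank_mul_log (lipschitzWith_smul (φ ^ 2)) hφ_one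
    ((lipschitzWith_smul (ψ ^ 2)).weaken hψ_one) le_rfl hG
  simpa only [finrank_self, Nat.cast_one, one_mul, coe_nnnorm, Real.norm_eq_abs, Real.log_abs,
    NNReal.coe_one, Real.log_one, add_zero, smul_eq_mul] using h

end CatMap

section Torus

variable {p : ℝ}

lemma coverEntropy_univ_le_of_semiconj_coe [Fact (0 < p)] {S : ℝ × ℝ → ℝ × ℝ}
    {T : AddCircle p × AddCircle p → AddCircle p × AddCircle p}
    (h : Semiconj (Prod.map (↑) (↑)) S T) {c : EReal}
    (hS : ∀ F, IsBounded F → coverEntropy S F ≤ c) : coverEntropy T univ ≤ c := by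
  have hcoe : UniformContinuous ((↑) : ℝ → AddCircle p) :=
    uniformContinuous_addMonoidHom_of_continuous (f := QuotientAddGroup.mk' _)
      (AddCircle.continuous_mk' p)
  let F : Set (ℝ × ℝ) := Icc 0 (0 + p) ×ˢ Icc 0 (0 + p)
  have himage : Prod.map (↑) (↑) '' F = (univ : Set (AddCircle p × AddCircle p)) := by
    rw [prodMap_image_prod, AddCircle.coe_image_Icc_eq, univ_prod_univ]
  calc coverEntropy T univ = coverEntropy T (Prod.map (↑) (↑) '' F) := by rw [himage]
    _ ≤ coverEntropy S F :=
      coverEntropy_image_le_of_uniformContinuous h (hcoe.prodMap hcoe) F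
    _ ≤ c := hS F ((isBounded_Icc _ _).prod (isBounded_Icc _ _))

theorem coverEntropy_shearSnd_addCircle [Fact (0 < p)] :
    coverEntropy (shearSnd : AddCircle p × AddCircle p → _) univ = 0 :=
  (coverEntropy_univ_le_of_semiconj_coe (semiconj_prodMap_shearSnd (QuotientAddGroup.mk' _))
    fun _ ↦ coverEntropy_shearSnd_le_zero).antisymm (coverEntropy_nonneg _ univ_nonempty)

theorem coverEntropy_shearFst_addCircle [Fact (0 < p)] :
    coverEntropy (shearFst : AddCircle p × AddCircle p → _) univ = 0 := by
  refine le_antisymm ?_ (coverEntropy_nonneg _ univ_nonempty)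
  have h := coverEntropy_image_le_of_uniformContinuous
    (semiconj_swap_shearSnd_shearFst (G := AddCircle p)) uniformContinuous_swap univ
  rwa [image_univ_of_surjective Prod.swap_surjective, coverEntropy_shearSnd_addCircle] at h

lemma dist_coe_addCircle_eq (hp : 0 < p) {s t : ℝ} (hst : |s - t| ≤ p / 2) :
    dist (s : AddCircle p) t = |s - t| := by
  rw [dist_eq_norm, ← AddCircle.coe_sub, AddCircle.norm_coe_eq_abs_iff p hp.ne', abs_of_pos hp]
  exact hst

theorem log_le_coverEntropy_catMap_addCircle (hp : 0 < p) :
    (Real.log (φ ^ 2) : EReal) ≤ coverEntropy (catMap : AddCircle p × AddCircle p → _) univ := by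
  let leaf : ℝ → AddCircle p × AddCircle p := Prod.map (↑) (↑) ∘ fun t : ℝ ↦ (φ * t, t)
  have hleaf : Semiconj leaf (φ ^ 2 * ·) catMap :=
    (semiconj_prodMap_catMap (QuotientAddGroup.mk' _)).comp_left semiconj_eigenline
  have hexp (s t : ℝ) (hst : |s - t| < p / 2) : 1 * |s - t| ≤ dist (leaf s) (leaf t) := by
    rw [one_mul, ← dist_coe_addCircle_eq hp hst.le]
    exact le_max_right _ _
  exact (log_le_coverEntropy_image_Ico hleaf (by positivity) one_pos (half_pos hp) hexp).trans
    (coverEntropy_monotone _ (subset_univ _))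

theorem coverEntropy_catMap_addCircle [hp : Fact (0 < p)] :
    coverEntropy (catMap : AddCircle p × AddCircle p → _) univ = (Real.log (φ ^ 2) : EReal) :=
  (coverEntropy_univ_le_of_semiconj_coe (semiconj_prodMap_catMap (QuotientAddGroup.mk' _))
    fun _ ↦ coverEntropy_catMap_le).antisymm (log_le_coverEntropy_catMap_addCircle hp.out)

end Torus

theorem entropy_subadditivity_fails_without_commutativity_general {p : ℝ} [Fact (0 < p)]
    (FB FBt FA : AddCircle p × AddCircle p → AddCircle p × AddCircle p)
    (hFB : FB = fun q ↦ (q.1 + q.2, q.2))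
    (hFBt : FBt = fun q ↦ (q.1, q.1 + q.2))
    (hFA : FA = fun q ↦ (q.1 + q.1 + q.2, q.1 + q.2)) :
    FA = FB ∘ FBt ∧
    coverEntropy FB univ = 0 ∧
    coverEntropy FBt univ = 0 ∧
    coverEntropy FA univ = (Real.log ((3 + √5) / 2) : EReal) ∧
    0 < coverEntropy FA univ ∧
    ¬ coverEntropy FA univ ≤ coverEntropy FB univ + coverEntropy FBt univ := by
  have hcomp : FA = FB ∘ FBt := by
    rw [hFA, hFB, hFBt]
    exact catMap_eq_shearFst_comp_shearSnd
  have hB : coverEntropy FB univ = 0 := hFB ▸ coverEntropy_shearFst_addCircle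
  have hBt : coverEntropy FBt univ = 0 := hFBt ▸ coverEntropy_shearSnd_addCircle
  have hA : coverEntropy FA univ = (Real.log ((3 + √5) / 2) : EReal) := by
    have hsq : (3 + √5) / 2 = φ ^ 2 := by
      rw [Real.goldenRatio_sq, Real.goldenRatio]
      ring
    rw [hsq, hFA]
    exact coverEntropy_catMap_addCircle
  have hA_pos : 0 < coverEntropy FA univ := by
    rw [hA, EReal.coe_pos]
    exact Real.log_pos (by linarith [Real.sqrt_nonneg 5])
  refine ⟨hcomp, hB, hBt, hA, hA_pos, ?_⟩
  rw [hB, hBt, add_zero]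
  exact hA_pos.not_ge

theorem entropy_subadditivity_fails_without_commutativity
    (FB FBt FA : (AddCircle (1:ℝ) × AddCircle (1:ℝ)) → (AddCircle (1:ℝ) × AddCircle (1:ℝ)))
    (hFB : FB = fun p => (p.1 + p.2, p.2))
    (hFBt : FBt = fun p => (p.1, p.1 + p.2))
    (hFA : FA = fun p => (p.1 + p.1 + p.2, p.1 + p.2)) :
    FA = FB ∘ FBt ∧
    coverEntropy FB Set.univ = 0 ∧
    coverEntropy FBt Set.univ = 0 ∧
    coverEntropy FA Set.univ = (Real.log ((3 + Real.sqrt 5) / 2) : EReal) ∧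
    (0 : EReal) < coverEntropy FA Set.univ ∧
    ¬ (coverEntropy FA Set.univ ≤ coverEntropy FB Set.univ + coverEntropy FBt Set.univ) :=
  entropy_subadditivity_fails_without_commutativity_general FB FBt FA hFB hFBt hFA
end

section
/- Let A ∈ SL₂(ℤ) be such that either |trace A| > 2, or trace A = ±2 and A ≠ ±Id (i.e. A has real eigenvalues and is not ±Id, or A is a Jordan box). Let G = ℤ² ⋊_A ℤ be the semidirect product in which the generator of ℤ acts on ℤ² by the automorphism given by A. Then G is not almost commutative: G contains no abelian subgroup of finite index. -/
/-!
If a semidirect product `N ⋊[φ] G` has a commutative subgroup of finite index, then for some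
`m ≠ 0` all `m`-th powers commute. Comparing `g ^ m` with `n ^ m` shows that `φ g ^ m` fixes
`n ^ m`, hence fixes `n` when `N` is torsion-free, so that every `φ g` has finite order.

On the other hand, if `A` is a `2 × 2` matrix with `2 ≤ |trace A|` and `|det A| ≤ 1`, then
Cayley–Hamilton gives `A ^ (k + 1) = aₖ • A - bₖ • 1` with `|bₖ| < |aₖ|`, by induction on `k`.
In particular `aₖ ≠ 0`, so a power of `A` is scalar only if `A` is, and over an ordered ring the
only scalar matrices of finite order are `±1`.
-/

section Group

variable {G : Type*} [Group G]

theorem exists_ne_zero_forall_commute_pow (H : Subgroup G) [H.FiniteIndex] [IsMulCommutative H] :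
    ∃ m : ℕ, m ≠ 0 ∧ ∀ x y : G, Commute (x ^ m) (y ^ m) := by
  have pow_mem (x : G) : x ^ H.normalCore.index ∈ H :=
    H.normalCore_le (H.normalCore.pow_index_mem x)
  exact ⟨H.normalCore.index, Subgroup.FiniteIndex.index_ne_zero, fun x y =>
    setLike_mul_comm (pow_mem x) (pow_mem y)⟩

theorem commute_inr_inl_iff {N : Type*} [Group N] {φ : G →* MulAut N} {g : G} {n : N} :
    Commute (SemidirectProduct.inr g : N ⋊[φ] G) (SemidirectProduct.inl n) ↔ φ g n = n := by
  simp [commute_iff_eq, SemidirectProduct.ext_iff]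

theorem isOfFinOrder_apply_of_finiteIndex_of_isMulCommutative {N : Type*} [Group N]
    [IsMulTorsionFree N] {φ : G →* MulAut N} (H : Subgroup (N ⋊[φ] G)) [H.FiniteIndex]
    [IsMulCommutative H] (g : G) : IsOfFinOrder (φ g) := by
  obtain ⟨m, hm, hcomm⟩ := exists_ne_zero_forall_commute_pow H
  refine isOfFinOrder_iff_pow_eq_one.mpr ⟨m, hm.pos, MulEquiv.ext fun n => ?_⟩
  have hfix : φ (g ^ m) (n ^ m) = n ^ m := by
    simpa only [← map_pow, commute_inr_inl_iff] using
      hcomm (SemidirectProduct.inr g) (SemidirectProduct.inl n)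
  rw [map_pow, map_pow] at hfix
  exact pow_left_injective hm hfix

theorem pow_toMultiplicative_eq_one_iff {M : Type*} [AddGroup M] {e : M ≃+ M} {n : ℕ} :
    (AddEquiv.toMultiplicative e : MulAut (Multiplicative M)) ^ n = 1 ↔ e^[n] = id := by
  have coe_pow : ⇑((AddEquiv.toMultiplicative e : MulAut (Multiplicative M)) ^ n) = e^[n] :=
    hom_coe_pow (fun f : MulAut (Multiplicative M) => ⇑f) rfl (fun _ _ => rfl) _ n
  rw [← coe_pow]
  exact DFunLike.coe_injective.eq_iff.symm

end Group

section Matrix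

variable {R : Type*} [CommRing R]

theorem isOfFinOrder_toMultiplicative_iff {ι M : Type*} [Fintype ι] [DecidableEq ι]
    [AddCommGroup M] [Module R M] (b : Module.Basis ι R M) {A : Matrix ι ι R} {e : M ≃+ M}
    (he : ∀ v, e v = A.toLin b b v) :
    IsOfFinOrder (AddEquiv.toMultiplicative e : MulAut (Multiplicative M)) ↔ IsOfFinOrder A := by
  have coe_e : ⇑e = A.toLin b b := funext he
  have pow_eq_one_iff (n : ℕ) :
      (AddEquiv.toMultiplicative e : MulAut (Multiplicative M)) ^ n = 1 ↔ A ^ n = 1 := by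
    calc (AddEquiv.toMultiplicative e : MulAut (Multiplicative M)) ^ n = 1
      _ ↔ e^[n] = id := pow_toMultiplicative_eq_one_iff
      _ ↔ A.toLin b b ^ n = 1 := by
        rw [coe_e, ← Module.End.coe_pow]
        exact (DFunLike.coe_injective (F := Module.End R M)).eq_iff (b := 1)
      _ ↔ A ^ n = 1 := by
        rw [← Matrix.toLin_pow, Module.End.one_eq_id, ← Matrix.toLin_one b,
          (Matrix.toLin b b).injective.eq_iff]
  simp only [isOfFinOrder_iff_pow_eq_one, pow_eq_one_iff]

theorem sq_eq_trace_smul_sub_det_smul_one (A : Matrix (Fin 2) (Fin 2) R) :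
    A ^ 2 = A.trace • A - A.det • (1 : Matrix (Fin 2) (Fin 2) R) := by
  nontriviality R
  have h := A.aeval_self_charpoly
  simp only [Matrix.charpoly_fin_two, map_add, map_sub, map_mul, map_pow, Polynomial.aeval_X,
    Polynomial.aeval_C, Algebra.algebraMap_eq_smul_one, smul_one_mul] at h
  rw [← sub_eq_zero, ← h]
  abel

theorem mem_range_scalar_of_smul_mem_range_scalar {n : Type*} [Fintype n] [DecidableEq n]
    [IsDomain R] {A : Matrix n n R} {a : R} (ha : a ≠ 0)
    (h : a • A ∈ Set.range (Matrix.scalar n)) : A ∈ Set.range (Matrix.scalar n) := by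
  rw [Matrix.mem_range_scalar_iff_commute_single] at h ⊢
  intro i j hij
  have hcomm := (h i j hij).eq
  rw [Matrix.mul_smul, Matrix.smul_mul] at hcomm
  exact smul_right_injective _ ha hcomm

variable [LinearOrder R] [IsStrictOrderedRing R] {A : Matrix (Fin 2) (Fin 2) R}

theorem exists_pow_succ_eq_smul_sub_smul_one (hdet : |A.det| ≤ 1) (htr : 2 ≤ |A.trace|) (k : ℕ) :
    ∃ a b : R, A ^ (k + 1) = a • A - b • (1 : Matrix (Fin 2) (Fin 2) R) ∧ |b| < |a| := by
  induction k with
  | zero => exact ⟨1, 0, by simp, by simp⟩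
  | succ k ih =>
    obtain ⟨a, b, hpow, hab⟩ := ih
    refine ⟨A.trace * a - b, A.det * a, ?_, ?_⟩
    · rw [pow_succ, hpow, sub_mul, smul_mul_assoc, ← sq,
        sq_eq_trace_smul_sub_det_smul_one, smul_one_mul]
      module
    · calc |A.det * a|
        _ = |A.det| * |a| := abs_mul _ _
        _ ≤ |a| := mul_le_of_le_one_left (abs_nonneg a) hdet
        _ < 2 * |a| - |b| := by linarith
        _ ≤ |A.trace| * |a| - |b| := by gcongr
        _ = |A.trace * a| - |b| := by rw [abs_mul]
        _ ≤ |A.trace * a - b| := abs_sub_abs_le_abs_sub _ _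

theorem eq_one_or_eq_neg_one_of_isOfFinOrder (hA : IsOfFinOrder A) (htr : 2 ≤ |A.trace|) :
    A = 1 ∨ A = -1 := by
  obtain ⟨m, hm, hpow⟩ := isOfFinOrder_iff_pow_eq_one.mp hA
  have hdet : |A.det| = 1 := by
    rw [← abs_pow_eq_one A.det hm.ne', ← Matrix.det_pow, hpow, Matrix.det_one, abs_one]
  obtain ⟨a, b, hlin, hba⟩ := exists_pow_succ_eq_smul_sub_smul_one hdet.le htr (m - 1)
  rw [Nat.sub_add_cancel hm, hpow] at hlin
  have ha : a ≠ 0 := abs_pos.mp ((abs_nonneg b).trans_lt hba)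
  have hsmul : a • A = Matrix.scalar (Fin 2) (1 + b) := by
    rw [Matrix.scalar_apply, ← Matrix.smul_one_eq_diagonal, add_smul, one_smul,
      eq_sub_iff_add_eq.mp hlin]
  obtain ⟨x, rfl⟩ := mem_range_scalar_of_smul_mem_range_scalar ha ⟨1 + b, hsmul.symm⟩
  have hx : x ^ m = 1 := by
    rw [← map_pow] at hpow
    exact Matrix.scalar_inj.mp (hpow.trans (map_one _).symm)
  rcases (pow_eq_one_iff_of_ne_zero hm.ne').mp hx with rfl | ⟨rfl, -⟩
  · exact .inl (map_one _)
  · exact .inr (by rw [map_neg, map_one])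

end Matrix

theorem suspension_fundamental_group_not_almost_commutative_general
    (A : Matrix (Fin 2) (Fin 2) ℤ)
    (hyp : 2 < |A.trace| ∨ ((A.trace = 2 ∨ A.trace = -2) ∧ A ≠ 1 ∧ A ≠ -1))
    (e : (ℤ × ℤ) ≃+ (ℤ × ℤ))
    (he : ∀ v : ℤ × ℤ, e v = (A 0 0 * v.1 + A 0 1 * v.2, A 1 0 * v.1 + A 1 1 * v.2)) :
    ¬ ∃ H : Subgroup (SemidirectProduct (Multiplicative (ℤ × ℤ)) (Multiplicative ℤ)
        (zpowersHom (MulAut (Multiplicative (ℤ × ℤ))) (AddEquiv.toMultiplicative e))),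
      H.FiniteIndex ∧ ∀ x y : H, x * y = y * x := by
  rintro ⟨H, _, hcomm⟩
  have : IsMulCommutative H := ⟨⟨hcomm⟩⟩
  have he_order : IsOfFinOrder (AddEquiv.toMultiplicative e : MulAut (Multiplicative (ℤ × ℤ))) := by
    simpa using isOfFinOrder_apply_of_finiteIndex_of_isMulCommutative H (Multiplicative.ofAdd 1)
  have he_toLin (v : ℤ × ℤ) : e v = A.toLin (.finTwoProd ℤ) (.finTwoProd ℤ) v := by
    conv_rhs => rw [A.eta_fin_two, Matrix.toLin_finTwoProd_apply]
    exact he v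
  have hA_order : IsOfFinOrder A := (isOfFinOrder_toMultiplicative_iff _ he_toLin).mp he_order
  have htr : 2 ≤ |A.trace| := by
    rcases hyp with h | ⟨h | h, -⟩
    · exact h.le
    · simp [h]
    · simp [h]
  rcases eq_one_or_eq_neg_one_of_isOfFinOrder hA_order htr with rfl | rfl <;> simp at hyp

theorem suspension_fundamental_group_not_almost_commutative
    (A : Matrix (Fin 2) (Fin 2) ℤ) (hdet : A.det = 1)
    (hyp : 2 < |A.trace| ∨ ((A.trace = 2 ∨ A.trace = -2) ∧ A ≠ 1 ∧ A ≠ -1))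
    (e : (ℤ × ℤ) ≃+ (ℤ × ℤ))
    (he : ∀ v : ℤ × ℤ, e v = (A 0 0 * v.1 + A 0 1 * v.2, A 1 0 * v.1 + A 1 1 * v.2)) :
    ¬ ∃ H : Subgroup (SemidirectProduct (Multiplicative (ℤ × ℤ)) (Multiplicative ℤ)
        (zpowersHom (MulAut (Multiplicative (ℤ × ℤ))) (AddEquiv.toMultiplicative e))),
      H.FiniteIndex ∧ ∀ x y : H, x * y = y * x :=
  suspension_fundamental_group_not_almost_commutative_general A hyp e he
end

section
/- Let θ ≠ 0 be a real number and define vector fields on ℝ³ by ξ₁(x,y,t) = (cos(θt), −sin(θt), 0) and ξ₂(x,y,t) = (0,0,1). Then at every point p ∈ ℝ³ the three vectors ξ₁(p), ξ₂(p) and the Lie bracket [ξ₂,ξ₁](p) form a basis of ℝ³; in particular the plane field spanned by ξ₁ and ξ₂ is a contact (completely non-holonomic) distribution. -/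
/-!
The bracket of `∂/∂t` with a horizontal field `(a(t), b(t), 0)` is `(a'(t), b'(t), 0)`, so the three
fields are independent exactly where the Wronskian `a b' - b a'` does not vanish. For
`a = cos (θt)`, `b = -sin (θt)` the Wronskian is the constant `-θ`.
-/

lemma lieBracketR3_const_left (v : ℝ × ℝ × ℝ) (Y : ℝ × ℝ × ℝ → ℝ × ℝ × ℝ) (p : ℝ × ℝ × ℝ) :
    lieBracketR3 (fun _ => v) Y p = fderiv ℝ Y p v := by
  simp [lieBracketR3]

lemma lieBracketR3_const_comp_snd_snd {γ : ℝ → ℝ × ℝ × ℝ} {γ' p : ℝ × ℝ × ℝ}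
    (hγ : HasDerivAt γ γ' p.2.2) (v : ℝ × ℝ × ℝ) :
    lieBracketR3 (fun _ => v) (fun q => γ q.2.2) p = v.2.2 • γ' := by
  have hcomp := hγ.hasFDerivAt.comp p (hasFDerivAt_snd.comp p hasFDerivAt_snd)
  rw [lieBracketR3_const_left]
  exact DFunLike.congr_fun hcomp.fderiv v

lemma linearIndependent_horizontal_vertical_of_det_ne_zero {R : Type*} [CommRing R]
    [NoZeroDivisors R] {a b c d : R} (hdet : a * d - b * c ≠ 0) :
    LinearIndependent R ![((a, b, 0) : R × R × R), (0, 0, 1), (c, d, 0)] := by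
  rw [Fintype.linearIndependent_iff]
  intro g hg
  obtain ⟨hx, hy, hz⟩ : g 0 * a + g 2 * c = 0 ∧ g 0 * b + g 2 * d = 0 ∧ g 1 = 0 := by
    simpa [Fin.sum_univ_three] using hg
  have hg₀ : g 0 = 0 :=
    (mul_eq_zero_iff_right hdet).mp (by linear_combination d * hx - c * hy)
  have hg₂ : g 2 = 0 :=
    (mul_eq_zero_iff_right hdet).mp (by linear_combination a * hy - b * hx)
  simp [Fin.forall_fin_succ, hg₀, hz, hg₂]

lemma span_triple_eq_top_of_linearIndependent {K V : Type*} [DivisionRing K] [AddCommGroup V]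
    [Module K V] {x y z : V} (hli : LinearIndependent K ![x, y, z])
    (hV : Module.finrank K V = 3) :
    Submodule.span K {x, y, z} = ⊤ := by
  have hspan := hli.span_eq_top_of_card_eq_finrank (by simp [hV])
  rwa [Matrix.range_cons, Matrix.range_cons_cons_empty, Set.singleton_union] at hspan

lemma linearIndependent_lieBracketR3_of_wronskian_ne_zero {a b : ℝ → ℝ} {a' b' : ℝ}
    {p : ℝ × ℝ × ℝ} (ha : HasDerivAt a a' p.2.2) (hb : HasDerivAt b b' p.2.2)
    (hW : a p.2.2 * b' - b p.2.2 * a' ≠ 0) :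
    LinearIndependent ℝ ![(a p.2.2, b p.2.2, 0), (0, 0, 1),
      lieBracketR3 (fun _ => (0, 0, 1)) (fun q => (a q.2.2, b q.2.2, 0)) p] := by
  have hbracket : lieBracketR3 (fun _ => (0, 0, 1)) (fun q => (a q.2.2, b q.2.2, 0)) p =
      (a', b', 0) := by
    simpa using lieBracketR3_const_comp_snd_snd
      (ha.prodMk (hb.prodMk (hasDerivAt_const p.2.2 (0 : ℝ)))) (0, 0, 1)
  rw [hbracket]
  exact linearIndependent_horizontal_vertical_of_det_ne_zero hW

theorem contact_distribution_elliptic_case (θ : ℝ) (hθ : θ ≠ 0)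
    (ξ₁ ξ₂ : ℝ × ℝ × ℝ → ℝ × ℝ × ℝ)
    (hξ₁ : ξ₁ = fun p => (Real.cos (θ * p.2.2), -Real.sin (θ * p.2.2), 0))
    (hξ₂ : ξ₂ = fun _ => (0, 0, 1)) :
    ∀ p : ℝ × ℝ × ℝ,
      LinearIndependent ℝ ![ξ₁ p, ξ₂ p, lieBracketR3 ξ₂ ξ₁ p] ∧
      Submodule.span ℝ {ξ₁ p, ξ₂ p, lieBracketR3 ξ₂ ξ₁ p} = ⊤ := by
  intro p
  subst hξ₁ hξ₂
  have hangle : HasDerivAt (fun t => θ * t) θ p.2.2 := hasDerivAt_const_mul θ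
  have hwronskian : Real.cos (θ * p.2.2) * -(Real.cos (θ * p.2.2) * θ) -
      -Real.sin (θ * p.2.2) * (-Real.sin (θ * p.2.2) * θ) = -θ := by
    linear_combination -θ * Real.sin_sq_add_cos_sq (θ * p.2.2)
  have hli := linearIndependent_lieBracketR3_of_wronskian_ne_zero hangle.cos hangle.sin.fun_neg
    (hwronskian.trans_ne (neg_ne_zero.mpr hθ))
  exact ⟨hli, span_triple_eq_top_of_linearIndependent hli (by simp)⟩
end
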